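/- Assume the Extended Riemann Hypothesis. Then there exists an absolute constant C such that for all real n ≥ 2, all integers D with 1 ≤ D < n, and all integers a with gcd(a, D) = 1: |π(n, D, a) − li(n)/φ(D)| ≤ C·√n·log n, where π(n, D, a) denotes the number of primes p ≤ n with p ≡ a (mod D), li(n) = ∫_2^n dt/log t, and φ is Euler's totient function. -/

import Mathlib

/-- The Extended Riemann Hypothesis: every zero of every Dirichlet `L`-function
in the critical strip lies on the critical line. -/
def ExtendedRiemannHypothesis : Prop :=
  ∀ (N : ℕ) [NeZero N] (χ : DirichletCharacter ℂ N) (s : ℂ),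
    0 < s.re → s.re < 1 → DirichletCharacter.LFunction χ s = 0 → s.re = 1 / 2

/-- `π(n, D, a)`: the number of primes `p ≤ n` with `p ≡ a (mod D)`. -/
noncomputable def primesCountMod (n : ℝ) (D a : ℕ) : ℕ :=
  {p : ℕ | p.Prime ∧ (p : ℝ) ≤ n ∧ p % D = a % D}.ncard

/-- The logarithmic integral `li(n) = ∫_2^n dt / log t`. -/
noncomputable def li (n : ℝ) : ℝ := ∫ t in (2 : ℝ)..n, 1 / Real.log t

/-!
Let `G` be the logarithmic derivative of the entire function obtained from `L(χ, s)` by removing the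
pole at `1` when `χ` is principal. Write `ε = 1 / log x`, and let `K` be the Mellin transform of the
weight that is `1` on `[0, y]` and decreases linearly to `0` on `[y, y + √x]`. Up to the pole term,
the sum of `χ(n) Λ(n)` against this weight is `-1 / (2π)` times the integral of `K G` over
`Re s = 1 + ε`. Under the Riemann hypothesis for `χ` the integral can be moved to
`Re s = 1 / 2 + ε`, where `G ≪ log²` pointwise, which is a logarithm too much. That logarithm is
saved by writing `K G = 2 K Re G - K Ḡ`.

* Every zero is on `Re s = 1 / 2`, so it contributes to `Re G` a Poisson kernel, of mass at most
  `π` whatever `ε` is. Hence `∫ |Re G|` over a unit window at height `t` is `≪ log (q (|t| + 2))`.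
* On the line `Re s = σ`, `Ḡ(s)` is the conjugate of `G` at the reflection `2 σ - s̄`, so the
  conjugate of `∫ K Ḡ` is again the integral of a holomorphic function. Moving it back puts `G` on
  `Re s = 1 + ε`, where it is `≪ 1 / ε`, and `K` on `Re s = ε`, where it is negligible.

Taking `y = x` and `y = x - √x` sandwiches `ψ(x; q, a)` by orthogonality of characters, and partial
summation turns `ψ` into `π`.
-/

section LogDeriv

open Complex Metric ComplexConjugate Set

variable {f g : ℂ → ℂ} {r r' R A M : ℝ} {c z ρ : ℂ}

lemma exists_eq_mul_exp_of_ne_zero (hg : DifferentiableOn ℂ g (ball c R))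
    (h0 : ∀ z ∈ ball c R, g z ≠ 0) :
    ∃ h : ℂ → ℂ, h c = 0 ∧ ∀ z ∈ ball c R,
      HasDerivAt h (logDeriv g z) z ∧ g z = g c * exp (h z) := by
  have hlog : DifferentiableOn ℂ (logDeriv g) (ball c R) := (hg.deriv isOpen_ball).div hg h0
  obtain ⟨h, hc, hh⟩ := hlog.isExactOn_ball.with_val_at c 0
  have hexp : DifferentiableOn ℂ (fun w => exp (h w)) (ball c R) := fun w hw =>
    (hh w hw).cexp.differentiableAt.differentiableWithinAt
  have heq : EqOn (logDeriv g) (logDeriv fun w => exp (h w)) (ball c R) := fun w hw => by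
    rw [logDeriv_apply (fun w => exp (h w)), (hh w hw).cexp.deriv,
      mul_div_cancel_left₀ _ (exp_ne_zero _)]
  obtain ⟨a, -, ha⟩ := (logDeriv_eqOn_iff hg hexp isOpen_ball (convex_ball c R).isPreconnected
    (fun w _ => exp_ne_zero _) h0).mp heq
  refine ⟨h, hc, fun w hw => ⟨hh w hw, ?_⟩⟩
  have hgc : g c = a := by simpa [hc] using ha (mem_ball_self (pos_of_mem_ball hw))
  simpa [hgc] using ha hw

lemma norm_logDeriv_le_of_ne_zero (hg : DifferentiableOn ℂ g (ball 0 R)) (hM : 0 < M)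
    (h0 : ∀ z ∈ ball (0 : ℂ) R, g z ≠ 0)
    (hb : ∀ z ∈ ball (0 : ℂ) R, ‖g z‖ ≤ ‖g 0‖ * Real.exp M) (hrR : r < R) (hz : ‖z‖ ≤ r) :
    ‖logDeriv g z‖ ≤ 8 * M * R / (R - r) ^ 2 := by
  have hr : 0 ≤ r := (norm_nonneg z).trans hz
  have hR : 0 < R := hr.trans_lt hrR
  have hsub : 0 < R - r := sub_pos.mpr hrR
  obtain ⟨h, hh0, hh⟩ := exists_eq_mul_exp_of_ne_zero hg h0
  have hd : DifferentiableOn ℂ h (ball 0 R) := fun w hw =>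
    (hh w hw).1.differentiableAt.differentiableWithinAt
  have hre : MapsTo h (ball 0 R) {z | z.re ≤ M} := fun w hw => by
    have hgw := hb w hw
    rw [(hh w hw).2, norm_mul, norm_exp] at hgw
    exact Real.exp_le_exp.mp
      (le_of_mul_le_mul_left hgw (norm_pos_iff.mpr (h0 0 (mem_ball_self hR))))
  have hclosed : closedBall z ((R - r) / 2) ⊆ ball 0 R := fun w hw => by
    rw [mem_closedBall_iff_norm] at hw
    rw [mem_ball_zero_iff]
    linarith [norm_sub_norm_le w z]
  have hbound : ∀ w ∈ sphere z ((R - r) / 2), ‖h w‖ ≤ 4 * M * R / (R - r) := fun w hw => by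
    have hwR := hclosed (sphere_subset_closedBall hw)
    have hw' : ‖w‖ ≤ (R + r) / 2 := by
      rw [mem_sphere_iff_norm] at hw
      linarith [norm_sub_norm_le w z]
    calc ‖h w‖ ≤ 2 * M * ‖w‖ / (R - ‖w‖) :=
          borelCaratheodory_zero hM hd hre (by linarith) hwR hh0
      _ ≤ 2 * M * R / ((R - r) / 2) := by gcongr <;> linarith
      _ = 4 * M * R / (R - r) := by field_simp; norm_num
  rw [← (hh z (hclosed (mem_closedBall_self (by linarith)))).1.deriv]
  calc ‖deriv h z‖ ≤ 4 * M * R / (R - r) / ((R - r) / 2) :=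
        norm_deriv_le_of_forall_mem_sphere_norm_le (by linarith)
          (hd.mono (closure_ball_subset_closedBall.trans hclosed)).diffContOnCl hbound
    _ = 8 * M * R / (R - r) ^ 2 := by field_simp; ring

/-- The quotient of `f` by the Blaschke factor `R (z - ρ) / (R ^ 2 - conj ρ * z)` of the disc of
radius `R` centred at `0`. It is encoded through `dslope`, so that dividing out a zero `ρ` of `f`
leaves a function that is holomorphic at `ρ` as well. -/
noncomputable def blaschkeQuotient (R : ℝ) (ρ : ℂ) (f : ℂ → ℂ) (z : ℂ) : ℂ :=
  dslope f ρ z * ((R ^ 2 - conj ρ * z) / R)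

lemma blaschkeQuotient_of_ne (hfρ : f ρ = 0) (hz : z ≠ ρ) :
    blaschkeQuotient R ρ f z = f z * canonicalFactor R ρ z := by
  rw [blaschkeQuotient, dslope_of_ne _ hz, slope_def_field, hfρ, sub_zero, canonicalFactor_apply,
    div_mul_div_comm, mul_comm (z - ρ), mul_div_assoc]

lemma diffContOnCl_blaschkeQuotient (hf : DiffContOnCl ℂ f (ball 0 R)) (hρ : ρ ∈ ball 0 R) :
    DiffContOnCl ℂ (blaschkeQuotient R ρ f) (ball 0 R) := by
  have hdslope : DiffContOnCl ℂ (dslope f ρ) (ball 0 R) :=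
    ⟨(differentiableOn_dslope (isOpen_ball.mem_nhds hρ)).mpr hf.differentiableOn,
      (continuousOn_dslope (Filter.mem_of_superset (isOpen_ball.mem_nhds hρ) subset_closure)).mpr
        ⟨hf.continuousOn, hf.differentiableAt isOpen_ball hρ⟩⟩
  have hfactor : Differentiable ℂ fun z : ℂ => ((R : ℂ) ^ 2 - conj ρ * z) / R := by fun_prop
  exact hdslope.smul hfactor.diffContOnCl

lemma norm_blaschkeQuotient_le (hf : DiffContOnCl ℂ f (ball 0 R)) (hρ : ρ ∈ ball 0 R)
    (hfρ : f ρ = 0) (hA : ∀ z ∈ closedBall 0 R, ‖f z‖ ≤ A) (hz : z ∈ closedBall 0 R) :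
    ‖blaschkeQuotient R ρ f z‖ ≤ A := by
  have hR := (pos_of_mem_ball hρ).ne'
  refine norm_le_of_forall_mem_frontier_norm_le isBounded_ball
    (diffContOnCl_blaschkeQuotient hf hρ) (fun w hw => ?_) (by rwa [closure_ball _ hR])
  rw [frontier_ball _ hR] at hw
  have hwρ : w ≠ ρ := by
    rintro rfl
    exact sphere_disjoint_ball.le_bot ⟨hw, hρ⟩
  rw [blaschkeQuotient_of_ne hfρ hwρ, norm_mul, norm_canonicalFactor_eval_circle_eq_one hρ hw,
    mul_one]
  exact hA w (sphere_subset_closedBall hw)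

lemma norm_blaschkeQuotient_zero (hR : 0 ≤ R) (hfρ : f ρ = 0) (hρ : ρ ≠ 0) :
    ‖blaschkeQuotient R ρ f 0‖ = ‖f 0‖ * (R / ‖ρ‖) := by
  rw [blaschkeQuotient_of_ne hfρ hρ.symm, norm_mul, canonicalFactor_apply]
  rcases hR.eq_or_lt with rfl | hR
  · simp
  · simp only [mul_zero, sub_zero, zero_sub, norm_div, norm_pow, norm_mul, norm_real,
      Real.norm_of_nonneg hR.le, norm_neg]
    field_simp

lemma eq_zero_of_blaschkeQuotient_eq_zero (hfρ : f ρ = 0) (hρ : ρ ∈ ball 0 R)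
    (hz : z ∈ closedBall 0 R) (h : blaschkeQuotient R ρ f z = 0) : f z = 0 := by
  by_cases hzρ : z = ρ
  · rwa [hzρ]
  · rw [blaschkeQuotient_of_ne hfρ hzρ] at h
    exact (mul_eq_zero.mp h).resolve_right (canonicalFactor_ne_zero hρ hz hzρ)

lemma logDeriv_canonicalFactor (hρ : ρ ∈ ball 0 R) (hz : z ∈ closedBall 0 R) (hzρ : z ≠ ρ) :
    logDeriv (canonicalFactor R ρ) z = -(1 / (z - ρ) + conj ρ / (R ^ 2 - conj ρ * z)) := by
  have hne := canonicalFactor_ne_zero hρ hz hzρ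
  rw [canonicalFactor_apply] at hne
  obtain ⟨hnum, hden⟩ := div_ne_zero_iff.mp hne
  have hnum' : HasDerivAt (fun w : ℂ => (R : ℂ) ^ 2 - conj ρ * w) (-conj ρ) z := by
    simpa using ((hasDerivAt_id z).const_mul (conj ρ)).const_sub ((R : ℂ) ^ 2)
  have hden' : HasDerivAt (fun w : ℂ => (R : ℂ) * (w - ρ)) R z := by
    simpa using ((hasDerivAt_id z).sub_const ρ).const_mul (R : ℂ)
  rw [canonicalFactor_def, logDeriv_div z hnum hden hnum'.differentiableAt hden'.differentiableAt,
    logDeriv_apply, logDeriv_apply, hnum'.deriv, hden'.deriv]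
  have hR : (R : ℂ) ≠ 0 := left_ne_zero_of_mul hden
  have hzρ' : z - ρ ≠ 0 := right_ne_zero_of_mul hden
  field_simp
  ring

lemma logDeriv_eq_logDeriv_blaschkeQuotient_add (hf : DifferentiableAt ℂ f z) (hfρ : f ρ = 0)
    (hρ : ρ ∈ ball 0 R) (hz : z ∈ closedBall 0 R) (hfz : f z ≠ 0) :
    logDeriv f z = logDeriv (blaschkeQuotient R ρ f) z +
      (1 / (z - ρ) + conj ρ / (R ^ 2 - conj ρ * z)) := by
  have hzρ : z ≠ ρ := fun h => hfz (h ▸ hfρ)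
  have heq : blaschkeQuotient R ρ f =ᶠ[nhds z] fun w => f w * canonicalFactor R ρ w :=
    (eventually_ne_nhds hzρ).mono fun w hw => blaschkeQuotient_of_ne hfρ hw
  rw [(logDeriv_congr_nhds heq).eq_of_nhds, logDeriv_mul z hfz
    (canonicalFactor_ne_zero hρ hz hzρ) hf
    (analyticOnNhd_canonicalFactor R ρ z hzρ).differentiableAt,
    logDeriv_canonicalFactor hρ hz hzρ, neg_add_cancel_right]

lemma mul_le_norm_blaschkeQuotient_zero (hR : 0 ≤ R) (hfρ : f ρ = 0) (hρ0 : ρ ≠ 0)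
    (hρ : ρ ∈ closedBall 0 r) : ‖f 0‖ * (R / r) ≤ ‖blaschkeQuotient R ρ f 0‖ := by
  rw [norm_blaschkeQuotient_zero hR hfρ hρ0]
  have := norm_pos_iff.mpr hρ0
  have := mem_closedBall_zero_iff.mp hρ
  gcongr

-- Each division by a Blaschke factor multiplies `‖f 0‖` by at least `R / r` without increasing the
-- maximum `A`, hence the bound `N` on the number of zeros.
lemma exists_logDeriv_eq_add_sum (hr : 0 < r) (hrR : r < R) (N : ℕ)
    (hf : DiffContOnCl ℂ f (ball 0 R)) (hA : ∀ z ∈ closedBall 0 R, ‖f z‖ ≤ A)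
    (hN : A < ‖f 0‖ * (R / r) ^ N) :
    ∃ n ≤ N, ∃ ρ : Fin n → ℂ, (∀ i, ρ i ∈ closedBall 0 r ∧ f (ρ i) = 0) ∧
      ∃ g : ℂ → ℂ, DiffContOnCl ℂ g (ball 0 R) ∧ (∀ z ∈ closedBall 0 r, g z ≠ 0) ∧
        (∀ z ∈ closedBall 0 R, ‖g z‖ ≤ A) ∧ ‖f 0‖ ≤ ‖g 0‖ ∧
        ∀ z ∈ closedBall 0 r, f z ≠ 0 → logDeriv f z = logDeriv g z +
          ∑ i, (1 / (z - ρ i) + conj (ρ i) / (R ^ 2 - conj (ρ i) * z)) := by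
  have hR := hr.trans hrR
  have hA0 := hA 0 (mem_closedBall_self hR.le)
  induction N generalizing f with
  | zero => exact absurd (by simpa using hN) hA0.not_gt
  | succ N ih =>
    by_cases hzero : ∃ ρ ∈ closedBall 0 r, f ρ = 0
    swap
    · push Not at hzero
      exact ⟨0, Nat.zero_le _, Fin.elim0, fun i => i.elim0, f, hf, hzero, hA, le_rfl, by simp⟩
    obtain ⟨ρ, hρr, hfρ⟩ := hzero
    have hsub : closedBall (0 : ℂ) r ⊆ ball 0 R := closedBall_subset_ball hrR
    have hρ := hsub hρr
    have hρ0 : ρ ≠ 0 := by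
      rintro rfl
      rw [hfρ, norm_zero] at hA0 hN
      linarith
    have hgain := mul_le_norm_blaschkeQuotient_zero hR.le hfρ hρ0 hρr
    have hbound : ∀ z ∈ closedBall 0 R, ‖blaschkeQuotient R ρ f z‖ ≤ A := fun z hz =>
      norm_blaschkeQuotient_le hf hρ hfρ hA hz
    obtain ⟨n, hn, τ, hτ, g, hg, hg0, hgA, hfg, hlog⟩ :=
      ih (diffContOnCl_blaschkeQuotient hf hρ) hbound
        (hN.trans_le (by rw [pow_succ', ← mul_assoc]; gcongr))
        (hbound 0 (mem_closedBall_self hR.le))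
    refine ⟨n + 1, by lia, Fin.cons ρ τ, ?_, g, hg, hg0, hgA, ?_, ?_⟩
    · exact Fin.cases ⟨hρr, hfρ⟩ fun i => ⟨(hτ i).1, eq_zero_of_blaschkeQuotient_eq_zero hfρ hρ
        (ball_subset_closedBall (hsub (hτ i).1)) (hτ i).2⟩
    · refine le_trans ?_ (hgain.trans hfg)
      exact le_mul_of_one_le_right (norm_nonneg _) ((one_le_div hr).mpr hrR.le)
    · intro z hz hfz
      have hzR := hsub hz
      have hzR' := ball_subset_closedBall hzR
      rw [logDeriv_eq_logDeriv_blaschkeQuotient_add (hf.differentiableAt isOpen_ball hzR) hfρ hρ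
        hzR' hfz, hlog z hz (mt (eq_zero_of_blaschkeQuotient_eq_zero hfρ hρ hzR') hfz),
        Fin.sum_univ_succ, add_assoc, add_comm (∑ _, _)]
      simp only [Fin.cons_zero, Fin.cons_succ]

lemma norm_conj_div_sq_sub_le (hrR : r < R) (hρ : ρ ∈ closedBall 0 r) (hz : z ∈ closedBall 0 r) :
    ‖conj ρ / (R ^ 2 - conj ρ * z)‖ ≤ r / (R ^ 2 - r ^ 2) := by
  rw [mem_closedBall_zero_iff] at hρ hz
  have hr : 0 ≤ r := (norm_nonneg z).trans hz
  have hprod : ‖ρ‖ * ‖z‖ ≤ r ^ 2 := by rw [sq]; gcongr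
  have hden : R ^ 2 - r ^ 2 ≤ ‖(R : ℂ) ^ 2 - conj ρ * z‖ := by
    have htri := norm_sub_norm_le ((R : ℂ) ^ 2) (conj ρ * z)
    rw [norm_mul, RCLike.norm_conj, norm_pow, norm_real, Real.norm_eq_abs, sq_abs] at htri
    linarith
  rw [norm_div, RCLike.norm_conj]
  have : 0 < R ^ 2 - r ^ 2 := by nlinarith
  gcongr

lemma exists_norm_logDeriv_sub_sum_le_of_center_zero (hr' : 0 < r') (hrr' : r < r')
    (hR : r' < R) : ∃ C > 0, ∀ (f : ℂ → ℂ) (M : ℝ), DiffContOnCl ℂ f (ball 0 R) → 1 ≤ M →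
      f 0 ≠ 0 → (∀ z ∈ closedBall 0 R, ‖f z‖ ≤ ‖f 0‖ * Real.exp M) →
      ∃ n : ℕ, n ≤ C * M ∧ ∃ ρ : Fin n → ℂ, (∀ i, ρ i ∈ closedBall 0 r' ∧ f (ρ i) = 0) ∧
        ∀ z ∈ closedBall 0 r, f z ≠ 0 → ‖logDeriv f z - ∑ i, 1 / (z - ρ i)‖ ≤ C * M := by
  have hRpos : 0 < R := hr'.trans hR
  have hRr : 0 < Real.log (R / r') := Real.log_pos ((one_lt_div hr').mpr hR)
  have hsq : 0 < R ^ 2 - r' ^ 2 := by nlinarith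
  have : 0 < r' - r := sub_pos.mpr hrr'
  set K := 1 / Real.log (R / r') + 1
  have : 0 < K := by positivity
  refine ⟨K + 8 * r' / (r' - r) ^ 2 + K * (r' / (R ^ 2 - r' ^ 2)), by positivity,
    fun f M hf hM hf0 hb => ?_⟩
  have hexp : Real.exp M < (R / r') ^ (⌊M / Real.log (R / r')⌋₊ + 1) := by
    rw [← Real.lt_log_iff_exp_lt (pow_pos (by positivity) _), Real.log_pow, ← div_lt_iff₀ hRr]
    exact_mod_cast Nat.lt_floor_add_one _
  obtain ⟨n, hn, ρ, hρ, g, hg, hg0, hgA, hfg, hlog⟩ := exists_logDeriv_eq_add_sum hr' hR _ hf hb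
    (mul_lt_mul_of_pos_left hexp (norm_pos_iff.mpr hf0))
  have hnK : (n : ℝ) ≤ K * M := by
    have hfloor := Nat.floor_le (show 0 ≤ M / Real.log (R / r') by positivity)
    have hn' : (n : ℝ) ≤ ⌊M / Real.log (R / r')⌋₊ + 1 := by exact_mod_cast hn
    calc (n : ℝ) ≤ M / Real.log (R / r') + M := by linarith
      _ = K * M := by ring
  have hsub : ball (0 : ℂ) r' ⊆ ball 0 R := ball_subset_ball hR.le
  refine ⟨n, hnK.trans (by gcongr; linarith [show 0 < 8 * r' / (r' - r) ^ 2 by positivity,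
    show 0 < K * (r' / (R ^ 2 - r' ^ 2)) by positivity]), ρ, hρ, fun z hz hfz => ?_⟩
  have hzr' := closedBall_subset_closedBall hrr'.le hz
  rw [hlog z hzr' hfz, Finset.sum_add_distrib, add_sub_assoc, add_sub_cancel_left]
  have hlog_g : ‖logDeriv g z‖ ≤ 8 * M * r' / (r' - r) ^ 2 :=
    norm_logDeriv_le_of_ne_zero (hg.differentiableOn.mono hsub) (by linarith)
      (fun w hw => hg0 w (ball_subset_closedBall hw))
      (fun w hw => (hgA w (ball_subset_closedBall (hsub hw))).trans (by gcongr)) hrr'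
      (mem_closedBall_zero_iff.mp hz)
  have hsum : ‖∑ i, conj (ρ i) / (R ^ 2 - conj (ρ i) * z)‖ ≤ n * (r' / (R ^ 2 - r' ^ 2)) := by
    simpa using norm_sum_le_of_le Finset.univ fun i _ => norm_conj_div_sq_sub_le hR (hρ i).1 hzr'
  calc _ ≤ 8 * M * r' / (r' - r) ^ 2 + K * M * (r' / (R ^ 2 - r' ^ 2)) :=
        norm_add_le_of_le hlog_g (hsum.trans (by gcongr))
    _ ≤ K * M + (8 * M * r' / (r' - r) ^ 2 + K * M * (r' / (R ^ 2 - r' ^ 2))) :=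
        le_add_of_nonneg_left (by positivity)
    _ = _ := by ring

lemma exists_norm_logDeriv_sub_sum_le (hr' : 0 < r') (hrr' : r < r') (hR : r' < R) :
    ∃ C > 0, ∀ (f : ℂ → ℂ) (c : ℂ) (M : ℝ), DiffContOnCl ℂ f (ball c R) → 1 ≤ M → f c ≠ 0 →
      (∀ z ∈ closedBall c R, ‖f z‖ ≤ ‖f c‖ * Real.exp M) →
      ∃ n : ℕ, n ≤ C * M ∧ ∃ ρ : Fin n → ℂ, (∀ i, ρ i ∈ closedBall c r' ∧ f (ρ i) = 0) ∧
        ∀ z ∈ closedBall c r, f z ≠ 0 → ‖logDeriv f z - ∑ i, 1 / (z - ρ i)‖ ≤ C * M := by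
  obtain ⟨C, hC, h⟩ := exists_norm_logDeriv_sub_sum_le_of_center_zero hr' hrr' hR
  refine ⟨C, hC, fun f c M hf hM hfc hb => ?_⟩
  have htranslate : MapsTo (c + ·) (ball 0 R) (ball c R) := fun z hz => by simpa using hz
  obtain ⟨n, hn, ρ, hρ, hlog⟩ := h (fun z => f (c + z)) M
    (hf.comp (differentiable_id.const_add c).diffContOnCl htranslate) hM (by simpa using hfc)
    fun z hz => by simpa using hb (c + z) (by simpa using hz)
  refine ⟨n, hn, fun i => c + ρ i, fun i => ⟨by simpa using (hρ i).1, (hρ i).2⟩, fun z hz hfz => ?_⟩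
  have hz' := hlog (z - c) (by simpa [dist_eq_norm] using hz) (by simpa using hfz)
  simpa only [logDeriv_apply, deriv_comp_const_add, add_sub_cancel, sub_sub] using hz'

end LogDeriv

section PeriodicPartialSums

/-- The remainder in the approximation `∑_{1 ≤ k ≤ u} f k ≈ m u`. -/
noncomputable def partialSumError (f : ℕ → ℂ) (m : ℂ) (u : ℝ) : ℂ :=
  ∑ k ∈ Finset.Icc 1 ⌊u⌋₊, f k - u * m

lemma measurable_partialSumError (f : ℕ → ℂ) (m : ℂ) : Measurable (partialSumError f m) := by
  have hsum : Measurable fun n : ℕ => ∑ k ∈ Finset.Icc 1 n, f k := measurable_from_nat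
  exact (hsum.comp Nat.measurable_floor).sub (by fun_prop)

variable {q : ℕ} [NeZero q]

/-- The mean value of a function on `ZMod q`. For a Dirichlet character it is the residue at `1` of
the `L`-function. -/
noncomputable def periodMean (f : ZMod q → ℂ) : ℂ := (∑ a, f a) / q

lemma one_le_natCast_of_neZero (q : ℕ) [NeZero q] : (1 : ℝ) ≤ q := by
  exact_mod_cast NeZero.one_le

variable {f : ZMod q → ℂ}

lemma norm_periodMean_le (hf : ∀ a, ‖f a‖ ≤ 1) : ‖periodMean f‖ ≤ 1 := by
  rw [periodMean, norm_div, Complex.norm_natCast,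
    div_le_one (zero_lt_one.trans_le (one_le_natCast_of_neZero q))]
  exact (norm_sum_le_of_le _ fun a _ => hf a).trans (by simp [ZMod.card])

variable (f) in
lemma sum_range_natCast_add_one_eq :
    ∑ k ∈ Finset.range q, f ((k + 1 : ℕ) : ZMod q) = q * periodMean f := by
  rw [periodMean, mul_div_cancel₀ _ (NeZero.ne (q : ℂ)),
    ← Equiv.sum_comp (Equiv.addRight (1 : ZMod q))]
  obtain ⟨q, rfl⟩ := Nat.exists_eq_succ_of_ne_zero (NeZero.ne q)
  rw [Finset.sum_range]
  refine Finset.sum_congr rfl fun i _ => congrArg f ?_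
  rw [Nat.cast_succ, Equiv.coe_addRight]
  exact congrArg (· + 1) (Fin.cast_val_eq_self i)

lemma norm_sum_range_natCast_sub_le (hf : ∀ a, ‖f a‖ ≤ 1) (n : ℕ) :
    ‖∑ k ∈ Finset.range n, f ((k + 1 : ℕ) : ZMod q) - n * periodMean f‖ ≤ 2 * q := by
  induction n using Nat.strong_induction_on with
  | _ n ih =>
    rcases lt_or_ge n q with hn | hn
    · have hsum : ‖∑ k ∈ Finset.range n, f ((k + 1 : ℕ) : ZMod q)‖ ≤ n :=
        (norm_sum_le_of_le _ fun k _ => hf _).trans (by simp)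
      have hmean : ‖(n : ℂ) * periodMean f‖ ≤ n := by
        rw [norm_mul, Complex.norm_natCast]
        exact mul_le_of_le_one_right n.cast_nonneg (norm_periodMean_le hf)
      have : (n : ℝ) ≤ q := mod_cast hn.le
      linarith [norm_sub_le (∑ k ∈ Finset.range n, f ((k + 1 : ℕ) : ZMod q)) (n * periodMean f)]
    · obtain ⟨r, rfl⟩ := Nat.exists_eq_add_of_le hn
      convert ih r (Nat.lt_add_of_pos_left (NeZero.pos q)) using 2
      rw [Finset.sum_range_add, sum_range_natCast_add_one_eq]
      simp only [Nat.cast_add, CharP.cast_eq_zero, zero_add]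
      ring

lemma norm_partialSumError_natCast_le (hf : ∀ a, ‖f a‖ ≤ 1) {u : ℝ} (hu : 0 ≤ u) :
    ‖partialSumError (fun k => f k) (periodMean f) u‖ ≤ 3 * q := by
  have hshift : ∑ k ∈ Finset.Icc 1 ⌊u⌋₊, f k
      = ∑ k ∈ Finset.range ⌊u⌋₊, f ((k + 1 : ℕ) : ZMod q) := by
    rw [Finset.range_eq_Ico, Finset.sum_Ico_add' (fun k : ℕ => f k) 0 _ 1]
    rfl
  have hfloor : ‖((⌊u⌋₊ : ℂ) - u) * periodMean f‖ ≤ 1 := by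
    rw [norm_mul, ← Complex.ofReal_natCast, ← Complex.ofReal_sub, Complex.norm_real,
      Real.norm_eq_abs]
    refine mul_le_one₀ (abs_le.mpr ?_) (norm_nonneg _) (norm_periodMean_le hf)
    constructor <;> linarith [Nat.floor_le hu, Nat.lt_floor_add_one u]
  calc ‖partialSumError (fun k => f k) (periodMean f) u‖
      = ‖(∑ k ∈ Finset.range ⌊u⌋₊, f ((k + 1 : ℕ) : ZMod q) - ⌊u⌋₊ * periodMean f)
          + ((⌊u⌋₊ : ℂ) - u) * periodMean f‖ := by
        rw [partialSumError, hshift]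
        congr 1
        ring
    _ ≤ 2 * q + 1 := norm_add_le_of_le (norm_sum_range_natCast_sub_le hf _) hfloor
    _ ≤ 3 * q := by linarith [one_le_natCast_of_neZero q]

end PeriodicPartialSums

section MellinTail

open Complex MeasureTheory Set Filter

variable {R : ℝ → ℂ} {B : ℝ} {s : ℂ}

lemma integrableOn_Ioi_mul_cpow (hR : Measurable R) (hB : ∀ u, 1 < u → ‖R u‖ ≤ B) (hs : 0 < s.re) :
    IntegrableOn (fun u : ℝ => R u * (u : ℂ) ^ (-(s + 1))) (Ioi 1) := by
  have hpow : IntegrableOn (fun u : ℝ => (u : ℂ) ^ (-(s + 1))) (Ioi 1) :=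
    integrableOn_Ioi_cpow_of_lt (by simpa using hs) zero_lt_one
  exact hpow.bdd_mul hR.aestronglyMeasurable
    ((ae_restrict_iff' measurableSet_Ioi).mpr (ae_of_all _ hB))

lemma norm_integral_Ioi_mul_cpow_le (hB : ∀ u, 1 < u → ‖R u‖ ≤ B) (hs : 0 < s.re) :
    ‖∫ u in Ioi (1 : ℝ), R u * (u : ℂ) ^ (-(s + 1))‖ ≤ B / s.re := by
  have hpow : IntegrableOn (fun u : ℝ => B * u ^ (-(s.re + 1))) (Ioi 1) :=
    (integrableOn_Ioi_rpow_of_lt (by linarith) zero_lt_one).const_mul _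
  calc ‖∫ u in Ioi (1 : ℝ), R u * (u : ℂ) ^ (-(s + 1))‖
      ≤ ∫ u in Ioi (1 : ℝ), B * u ^ (-(s.re + 1)) := by
        refine norm_integral_le_of_norm_le hpow
          ((ae_restrict_iff' measurableSet_Ioi).mpr (ae_of_all _ fun u (hu : 1 < u) => ?_))
        rw [norm_mul, norm_cpow_eq_rpow_re_of_pos (by linarith), neg_re, add_re, one_re]
        gcongr
        exact hB u hu
    _ = B / s.re := by
        rw [integral_const_mul, integral_Ioi_rpow_of_lt (by linarith) zero_lt_one, Real.one_rpow,
          neg_add, neg_add_cancel_right, neg_div_neg_eq, mul_one_div]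

variable (R s) in
lemma integral_Ioi_mul_cpow_eq_mellin :
    ∫ u in Ioi (1 : ℝ), R u * (u : ℂ) ^ (-(s + 1)) = mellin ((Ioi 1).indicator R) (-s) := by
  have hind : ∀ u : ℝ, (u : ℂ) ^ (-s - 1) • (Ioi 1).indicator R u
      = (Ioi 1).indicator (fun u => R u * (u : ℂ) ^ (-(s + 1))) u := fun u => by
    rw [indicator_mul_left, smul_eq_mul, mul_comm, neg_add']
  simp_rw [mellin, hind]
  rw [setIntegral_indicator measurableSet_Ioi,
    inter_eq_self_of_subset_right (Ioi_subset_Ioi zero_le_one)]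

lemma differentiableAt_integral_Ioi_mul_cpow (hR : Measurable R) (hB : ∀ u, 1 < u → ‖R u‖ ≤ B)
    (hs : 0 < s.re) :
    DifferentiableAt ℂ (fun s : ℂ => ∫ u in Ioi (1 : ℝ), R u * (u : ℂ) ^ (-(s + 1))) s := by
  have hB0 : 0 ≤ B := (norm_nonneg _).trans (hB 2 (by norm_num))
  have hbound : ∀ u, ‖(Ioi 1).indicator R u‖ ≤ B := fun u => by
    by_cases hu : u ∈ Ioi 1
    · simpa only [indicator_of_mem hu] using hB u hu
    · simpa only [indicator_of_notMem hu, norm_zero] using hB0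
  have hloc : LocallyIntegrable ((Ioi 1).indicator R) :=
    (locallyIntegrable_const B).mono (hR.indicator measurableSet_Ioi).aestronglyMeasurable
      (ae_of_all _ fun u => by rw [Real.norm_of_nonneg hB0]; exact hbound u)
  have hmellin : DifferentiableAt ℂ (mellin ((Ioi 1).indicator R)) (-s) := by
    refine mellin_differentiableAt_of_isBigO_rpow (a := 0) (b := (-s).re - 1)
      (hloc.locallyIntegrableOn _) ?_ (by simpa using hs) ?_ (by linarith)
    · exact Asymptotics.isBigO_of_le' (c := B) _ fun u => by simpa using hbound u
    · refine EventuallyEq.trans_isBigO ?_ (Asymptotics.isBigO_zero _ _)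
      filter_upwards [Ioo_mem_nhdsGT zero_lt_one] with u hu
      exact indicator_of_notMem (not_lt.mpr hu.2.le) R
  simp_rw [integral_Ioi_mul_cpow_eq_mellin]
  exact hmellin.comp s differentiableAt_id.neg

end MellinTail

section DirichletSeries

open Complex MeasureTheory Set Filter

variable {f : ℕ → ℂ} {m s : ℂ} {B : ℝ}

lemma isBigO_sum_of_norm_partialSumError_le
    (hB : ∀ u, 1 < u → ‖partialSumError f m u‖ ≤ B) :
    (fun n : ℕ => ∑ k ∈ Finset.Icc 1 n, f k) =O[atTop] fun n => (n : ℝ) ^ (1 : ℝ) := by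
  refine Asymptotics.IsBigO.of_bound (B + ‖m‖) ?_
  filter_upwards [eventually_gt_atTop 1] with n hn
  have hn' : (1 : ℝ) < n := mod_cast hn
  have herr := hB n hn'
  have hB0 : 0 ≤ B := (norm_nonneg _).trans herr
  rw [partialSumError, Nat.floor_natCast, ofReal_natCast] at herr
  rw [Real.rpow_one, RCLike.norm_natCast]
  calc ‖∑ k ∈ Finset.Icc 1 n, f k‖
      ≤ ‖∑ k ∈ Finset.Icc 1 n, f k - n * m‖ + ‖(n : ℂ) * m‖ := by
        simpa using norm_add_le (∑ k ∈ Finset.Icc 1 n, f k - n * m) (n * m)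
    _ ≤ B * n + n * ‖m‖ := by
        rw [norm_mul, norm_natCast]
        gcongr
        exact herr.trans (le_mul_of_one_le_right hB0 hn'.le)
    _ = (B + ‖m‖) * n := by ring

lemma LSeries_eq_add_integral_partialSumError (hB : ∀ u, 1 < u → ‖partialSumError f m u‖ ≤ B)
    (hs : 1 < s.re) (hf : LSeriesSummable f s) :
    LSeries f s = m * s / (s - 1)
      + s * ∫ u in Ioi (1 : ℝ), partialSumError f m u * (u : ℂ) ^ (-(s + 1)) := by
  have hs1 : s - 1 ≠ 0 := sub_ne_zero.mpr (by rintro rfl; simp at hs)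
  have hmain : IntegrableOn (fun u : ℝ => m * (u : ℂ) ^ (-s)) (Ioi 1) :=
    (integrableOn_Ioi_cpow_of_lt (by simpa using hs) zero_lt_one).const_mul _
  have herr := integrableOn_Ioi_mul_cpow (measurable_partialSumError f m) hB
    (zero_lt_one.trans hs)
  have hsplit : ∀ u ∈ Ioi (1 : ℝ), (∑ k ∈ Finset.Icc 1 ⌊u⌋₊, f k) * (u : ℂ) ^ (-(s + 1))
      = m * (u : ℂ) ^ (-s) + partialSumError f m u * (u : ℂ) ^ (-(s + 1)) := fun u hu => by
    have hu0 : (u : ℂ) ≠ 0 := ofReal_ne_zero.mpr (zero_lt_one.trans hu).ne'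
    rw [show -s = 1 + -(s + 1) by ring, cpow_add _ _ hu0, cpow_one, partialSumError]
    ring
  rw [LSeries_eq_mul_integral f zero_le_one hs hf (isBigO_sum_of_norm_partialSumError_le hB),
    setIntegral_congr_fun measurableSet_Ioi hsplit, integral_add hmain herr, integral_const_mul,
    integral_Ioi_cpow_of_lt (by simpa using hs) zero_lt_one, ofReal_one, one_cpow,
    show -s + 1 = -(s - 1) by ring]
  field_simp

lemma one_third_le_norm_LSeries (hf₁ : f 1 = 1) (hf : ∀ n, ‖f n‖ ≤ 1) (hs : 2 ≤ s.re) :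
    1 / 3 ≤ ‖LSeries f s‖ := by
  have hsum : LSeriesSummable f s :=
    LSeriesSummable_of_bounded_of_one_lt_re (fun n _ => hf n) (by linarith)
  have hsplit : LSeries f s = 1 + ∑' n, LSeries.term f s (n + 2) := by
    rw [LSeries, ← hsum.sum_add_tsum_nat_add 2]
    simp [Finset.sum_range_succ, LSeries.term, hf₁]
  have hzeta : HasSum (fun n : ℕ => 1 / ((n + 2 : ℕ) : ℝ) ^ 2) (Real.pi ^ 2 / 6 - 1) := by
    simpa [Finset.sum_range_succ] using (hasSum_nat_add_iff' 2).mpr hasSum_zeta_two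
  have htail : ‖∑' n, LSeries.term f s (n + 2)‖ ≤ Real.pi ^ 2 / 6 - 1 := by
    refine tsum_of_norm_bounded hzeta fun n => ?_
    rw [LSeries.norm_term_eq, if_neg (by omega), ← Real.rpow_natCast]
    gcongr
    · exact hf _
    · exact_mod_cast Nat.le_add_left 1 (n + 1)
    · exact_mod_cast hs
  have hpi : Real.pi ^ 2 / 6 - 1 ≤ 2 / 3 := by nlinarith [Real.pi_lt_d2, Real.pi_pos]
  have htri := norm_sub_le_norm_add (1 : ℂ) (∑' n, LSeries.term f s (n + 2))
  rw [norm_one] at htri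
  rw [hsplit]
  linarith

end DirichletSeries

section EntireLFunction

open Topology
open scoped ArithmeticFunction.vonMangoldt

variable {q : ℕ} [NeZero q] {χ : DirichletCharacter ℂ q} {s : ℂ}

/-- The Riemann hypothesis for the `L`-function of a single Dirichlet character. -/
def RiemannHypothesisFor (χ : DirichletCharacter ℂ q) : Prop :=
  ∀ s : ℂ, 0 < s.re → s.re < 1 → χ.LFunction s = 0 → s.re = 1 / 2

open Classical in
/-- The order of the pole at `1` of the `L`-function of a Dirichlet character. -/
noncomputable def poleOrder (χ : DirichletCharacter ℂ q) : ℕ := if χ = 1 then 1 else 0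

open Classical in
/-- The entire function `(s - 1) ^ poleOrder χ * L(χ, s)`. -/
noncomputable def entireLFunction (χ : DirichletCharacter ℂ q) : ℂ → ℂ :=
  if χ = 1 then DirichletCharacter.LFunctionTrivChar₁ q else χ.LFunction

@[simp]
lemma poleOrder_one : poleOrder (1 : DirichletCharacter ℂ q) = 1 := if_pos rfl

lemma poleOrder_of_ne_one (hχ : χ ≠ 1) : poleOrder χ = 0 := if_neg hχ

lemma poleOrder_le_one (χ : DirichletCharacter ℂ q) : poleOrder χ ≤ 1 := by
  unfold poleOrder
  split_ifs <;> simp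

lemma entireLFunction_of_ne_one (hχ : χ ≠ 1) : entireLFunction χ = χ.LFunction := if_neg hχ

lemma entireLFunction_one :
    entireLFunction (1 : DirichletCharacter ℂ q) = DirichletCharacter.LFunctionTrivChar₁ q :=
  if_pos rfl

lemma entireLFunction_apply (χ : DirichletCharacter ℂ q) (hs : s ≠ 1) :
    entireLFunction χ s = (s - 1) ^ poleOrder χ * χ.LFunction s := by
  by_cases hχ : χ = 1
  · subst hχ
    rw [entireLFunction_one, DirichletCharacter.LFunctionTrivChar₁, Function.update_of_ne hs,
      poleOrder_one, pow_one, DirichletCharacter.LFunctionTrivChar]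
  · rw [entireLFunction_of_ne_one hχ, poleOrder_of_ne_one hχ, pow_zero, one_mul]

lemma differentiable_entireLFunction (χ : DirichletCharacter ℂ q) :
    Differentiable ℂ (entireLFunction χ) := by
  by_cases hχ : χ = 1
  · rw [hχ, entireLFunction_one]
    exact DirichletCharacter.differentiable_LFunctionTrivChar₁ q
  · rw [entireLFunction_of_ne_one hχ]
    exact DirichletCharacter.differentiable_LFunction hχ

lemma entireLFunction_ne_zero_of_one_le_re (χ : DirichletCharacter ℂ q) (hs : 1 ≤ s.re) :
    entireLFunction χ s ≠ 0 := by
  rcases eq_or_ne s 1 with rfl | hs1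
  · by_cases hχ : χ = 1
    · rw [hχ, entireLFunction_one]
      exact DirichletCharacter.LFunctionTrivChar₁_apply_one_ne_zero q
    · rw [entireLFunction_of_ne_one hχ]
      exact DirichletCharacter.LFunction_ne_zero_of_one_le_re _ (.inl hχ) hs
  · rw [entireLFunction_apply χ hs1]
    exact mul_ne_zero (pow_ne_zero _ (sub_ne_zero.mpr hs1))
      (DirichletCharacter.LFunction_ne_zero_of_one_le_re _ (.inr hs1) hs)

lemma RiemannHypothesisFor.re_eq_half (hχ : RiemannHypothesisFor χ) (hs : 0 < s.re)
    (h0 : entireLFunction χ s = 0) : s.re = 1 / 2 := by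
  have hs1 : s.re < 1 := not_le.mp fun h => entireLFunction_ne_zero_of_one_le_re χ h h0
  have hne : s ≠ 1 := by
    rintro rfl
    simp at hs1
  rw [entireLFunction_apply χ hne] at h0
  exact hχ s hs hs1
    ((mul_eq_zero.mp h0).resolve_left (pow_ne_zero _ (sub_ne_zero.mpr hne)))

lemma RiemannHypothesisFor.differentiableAt_logDeriv (hχ : RiemannHypothesisFor χ)
    (hs : 1 / 2 < s.re) : DifferentiableAt ℂ (logDeriv (entireLFunction χ)) s :=
  ((differentiable_entireLFunction χ).deriv s).div (differentiable_entireLFunction χ s)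
    fun h0 => hs.ne' (hχ.re_eq_half (by linarith) h0)

lemma neg_logDeriv_entireLFunction (χ : DirichletCharacter ℂ q) (hs : 1 < s.re) :
    -logDeriv (entireLFunction χ) s =
      LSeries ((fun n : ℕ => χ n) * fun n : ℕ => (Λ n : ℂ)) s - poleOrder χ / (s - 1) := by
  have hs1 : s ≠ 1 := by
    rintro rfl
    simp at hs
  have hev : entireLFunction χ =ᶠ[𝓝 s] fun z => (z - 1) ^ poleOrder χ * χ.LFunction z :=
    (eventually_ne_nhds hs1).mono fun z hz => entireLFunction_apply χ hz
  have hsub : DifferentiableAt ℂ (fun z : ℂ => z - 1) s := by fun_prop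
  have hpow : logDeriv (fun z : ℂ => (z - 1) ^ poleOrder χ) s = poleOrder χ / (s - 1) := by
    rw [logDeriv_fun_pow hsub, logDeriv_apply, deriv_sub_const, deriv_id'', mul_one_div]
  rw [DirichletCharacter.LSeries_twist_vonMangoldt_eq χ hs,
    ← DirichletCharacter.deriv_LFunction_eq_deriv_LSeries χ hs,
    ← DirichletCharacter.LFunction_eq_LSeries χ hs, (logDeriv_congr_nhds hev).eq_of_nhds,
    logDeriv_mul (f := fun z => (z - 1) ^ poleOrder χ) s (pow_ne_zero _ (sub_ne_zero.mpr hs1))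
      (DirichletCharacter.LFunction_ne_zero_of_one_le_re χ (.inr hs1) hs.le) (hsub.pow _)
      (DirichletCharacter.differentiableAt_LFunction χ s (.inl hs1)), hpow, logDeriv_apply]
  ring

end EntireLFunction

section Growth

open Complex Set

variable {q : ℕ} [NeZero q] {s : ℂ}

lemma eqOn_re_gt_of_eqOn_re_gt {F G : ℂ → ℂ} {a b : ℝ} (hab : a ≤ b)
    (hF : DifferentiableOn ℂ F {z | a < z.re}) (hG : DifferentiableOn ℂ G {z | a < z.re})
    (h : EqOn F G {z | b < z.re}) : EqOn F G {z | a < z.re} := by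
  have hopen : ∀ c : ℝ, IsOpen {z : ℂ | c < z.re} := fun c =>
    isOpen_lt continuous_const continuous_re
  refine (hF.analyticOnNhd (hopen a)).eqOn_of_preconnected_of_eventuallyEq
    (hG.analyticOnNhd (hopen a)) (convex_halfSpace_re_gt a).isPreconnected
    (z₀ := ((b + 1 : ℝ) : ℂ)) ?_ (h.eventuallyEq_of_mem ((hopen b).mem_nhds ?_))
  · rw [mem_ofPred_eq, ofReal_re]
    linarith
  · simp

lemma entireLFunction_eq_of_one_lt_re (χ : DirichletCharacter ℂ q) (hs : 1 < s.re) :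
    entireLFunction χ s = s * (periodMean χ + (s - 1) ^ poleOrder χ *
      ∫ u in Ioi (1 : ℝ), partialSumError (fun k => χ k) (periodMean χ) u *
        (u : ℂ) ^ (-(s + 1))) := by
  have hs1 : s ≠ 1 := by
    rintro rfl
    simp at hs
  have hmean : (s - 1) ^ poleOrder χ * periodMean χ = (s - 1) * periodMean χ := by
    by_cases hχ : χ = 1
    · rw [hχ, poleOrder_one, pow_one]
    · rw [periodMean, χ.sum_eq_zero_of_ne_one hχ, zero_div, mul_zero, mul_zero]
  rw [entireLFunction_apply χ hs1, DirichletCharacter.LFunction_eq_LSeries χ hs,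
    LSeries_eq_add_integral_partialSumError
      (fun u hu => norm_partialSumError_natCast_le χ.norm_le_one (zero_le_one.trans hu.le)) hs
      (DirichletCharacter.LSeriesSummable_of_one_lt_re χ hs), mul_add, mul_div_assoc', ← mul_assoc,
    mul_assoc, ← mul_assoc _ (periodMean χ), hmean]
  have := sub_ne_zero.mpr hs1
  field_simp

lemma norm_entireLFunction_le (χ : DirichletCharacter ℂ q) (hs : 1 / 4 ≤ s.re) :
    ‖entireLFunction χ s‖ ≤ 13 * q * (‖s‖ + 1) ^ 2 := by
  set I : ℂ → ℂ := fun z => ∫ u in Ioi (1 : ℝ),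
    partialSumError (fun k => χ k) (periodMean χ) u * (u : ℂ) ^ (-(z + 1))
  have hR : ∀ u : ℝ, 1 < u → ‖partialSumError (fun k => χ k) (periodMean χ) u‖ ≤ 3 * q :=
    fun u hu => norm_partialSumError_natCast_le χ.norm_le_one (zero_le_one.trans hu.le)
  have hId : DifferentiableOn ℂ I {z | 0 < z.re} := fun z hz =>
    (differentiableAt_integral_Ioi_mul_cpow (measurable_partialSumError _ _) hR
      hz).differentiableWithinAt
  have hIs : ‖I s‖ ≤ 12 * q := by
    refine (norm_integral_Ioi_mul_cpow_le hR (by linarith)).trans ?_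
    rw [div_le_iff₀ (by linarith)]
    nlinarith [one_le_natCast_of_neZero q]
  have hcont : entireLFunction χ s = s * (periodMean χ + (s - 1) ^ poleOrder χ * I s) :=
    eqOn_re_gt_of_eqOn_re_gt zero_le_one (differentiable_entireLFunction χ).differentiableOn
      (G := fun z => z * (periodMean χ + (z - 1) ^ poleOrder χ * I z)) (by fun_prop)
      (fun z hz => entireLFunction_eq_of_one_lt_re χ hz)
      (show 0 < s.re by linarith)
  have hpow : ‖s - 1‖ ^ poleOrder χ ≤ ‖s‖ + 1 := by
    have hsub : ‖s - 1‖ ≤ ‖s‖ + 1 := (norm_sub_le _ _).trans_eq (by rw [norm_one])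
    calc ‖s - 1‖ ^ poleOrder χ ≤ (‖s‖ + 1) ^ poleOrder χ := by gcongr
      _ ≤ (‖s‖ + 1) ^ 1 := by
          gcongr
          · linarith [norm_nonneg s]
          · exact poleOrder_le_one χ
      _ = ‖s‖ + 1 := pow_one _
  have hs0 := norm_nonneg s
  calc ‖entireLFunction χ s‖
      = ‖s‖ * ‖periodMean χ + (s - 1) ^ poleOrder χ * I s‖ := by rw [hcont, norm_mul]
    _ ≤ ‖s‖ * (1 + (‖s‖ + 1) * (12 * q)) := by
        gcongr
        refine norm_add_le_of_le (norm_periodMean_le χ.norm_le_one) ?_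
        rw [norm_mul, norm_pow]
        gcongr
    _ ≤ 13 * q * (‖s‖ + 1) ^ 2 := by
        nlinarith [mul_nonneg hs0 hs0, one_le_natCast_of_neZero q,
          mul_nonneg (sub_nonneg.mpr (one_le_natCast_of_neZero q)) hs0]

lemma one_third_le_norm_entireLFunction (χ : DirichletCharacter ℂ q) (hs : 2 ≤ s.re) :
    1 / 3 ≤ ‖entireLFunction χ s‖ := by
  have hs1 : s ≠ 1 := by
    rintro rfl
    norm_num at hs
  have hsub : 1 ≤ ‖s - 1‖ := by
    refine le_trans ?_ (re_le_norm _)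
    rw [sub_re, one_re]
    linarith
  rw [entireLFunction_apply χ hs1, DirichletCharacter.LFunction_eq_LSeries χ (by linarith),
    norm_mul, norm_pow]
  exact (one_third_le_norm_LSeries (by simp) (fun n => χ.norm_le_one _) hs).trans
    (le_mul_of_one_le_left (norm_nonneg _) (one_le_pow₀ hsub))

lemma norm_entireLFunction_le_mul_exp (χ : DirichletCharacter ℂ q) {c z : ℂ} (hc : c.re = 2)
    (hz : z ∈ Metric.closedBall c (7 / 4)) :
    ‖entireLFunction χ z‖
      ≤ ‖entireLFunction χ c‖ * Real.exp (5 * Real.log (q * (|c.im| + 5))) := by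
  rw [mem_closedBall_iff_norm] at hz
  have hq := one_le_natCast_of_neZero q
  set T := |c.im| + 5
  have hT5 : 5 ≤ T := by linarith [abs_nonneg c.im]
  have hzre : 1 / 4 ≤ z.re := by
    have := (abs_re_le_norm (z - c)).trans hz
    rw [sub_re, hc, abs_le] at this
    linarith
  have hzT : ‖z‖ + 1 ≤ T := by
    have hcT : ‖c‖ ≤ 2 + |c.im| := (norm_le_abs_re_add_abs_im c).trans_eq (by rw [hc, abs_two])
    linarith [norm_le_norm_add_norm_sub' z c]
  have hexp : Real.exp (5 * Real.log (q * T)) = (q * T) ^ 5 := by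
    rw [mul_comm, Real.exp_mul, Real.exp_log (by positivity)]
    norm_cast
  calc ‖entireLFunction χ z‖ ≤ 13 * q * (‖z‖ + 1) ^ 2 := norm_entireLFunction_le χ hzre
    _ ≤ 13 * q * T ^ 2 := by gcongr
    _ ≤ 1 / 3 * (q * T) ^ 5 := by
        have hq5 : (q : ℝ) ≤ q ^ 5 := le_self_pow₀ hq (by norm_num)
        have hT3 : (5 : ℝ) ^ 3 ≤ T ^ 3 := by gcongr
        calc 13 * q * T ^ 2 = q * (13 * T ^ 2) := by ring
          _ ≤ q ^ 5 * (1 / 3 * T ^ 3 * T ^ 2) := by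
              gcongr
              linarith
          _ = 1 / 3 * (q * T) ^ 5 := by ring
    _ ≤ ‖entireLFunction χ c‖ * Real.exp (5 * Real.log (q * T)) := by
        rw [hexp]
        gcongr
        exact one_third_le_norm_entireLFunction χ hc.ge

end Growth

section VonMangoldt

open Complex MeasureTheory Set Filter
open scoped ArithmeticFunction.vonMangoldt

lemma term_vonMangoldt_ofReal (σ : ℝ) (n : ℕ) :
    LSeries.term (fun n : ℕ => (Λ n : ℂ)) σ n = ((Λ n / (n : ℝ) ^ σ : ℝ) : ℂ) := by
  rcases eq_or_ne n 0 with rfl | hn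
  · simp
  · rw [LSeries.term_of_ne_zero hn, ofReal_div, ofReal_cpow n.cast_nonneg, ofReal_natCast]

lemma summable_vonMangoldt_div_rpow {σ : ℝ} (hσ : 1 < σ) :
    Summable fun n : ℕ => Λ n / (n : ℝ) ^ σ := by
  have := ArithmeticFunction.LSeriesSummable_vonMangoldt (s := σ) (by simpa using hσ)
  rw [LSeriesSummable] at this
  simpa only [funext (term_vonMangoldt_ofReal σ), summable_ofReal] using this

lemma tsum_vonMangoldt_div_rpow_le {σ : ℝ} (hσ : 1 < σ) :
    ∑' n : ℕ, Λ n / (n : ℝ) ^ σ ≤ σ * ((Real.log 4 + 4) / (σ - 1)) := by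
  have hpsi : ∀ u : ℝ, ∑ k ∈ Finset.Icc 1 ⌊u⌋₊, Λ k = Chebyshev.psi u := fun u => rfl
  have hO : (fun n : ℕ => ∑ k ∈ Finset.Icc 1 n, Λ k) =O[atTop] fun n : ℕ => (n : ℝ) ^ (1 : ℝ) := by
    refine Asymptotics.isBigO_of_le' (c := Real.log 4 + 4) _ fun n => ?_
    have hn := hpsi n
    rw [Nat.floor_natCast] at hn
    rw [hn, Real.rpow_one, Real.norm_of_nonneg (Chebyshev.psi_nonneg _), Real.norm_natCast]
    exact Chebyshev.psi_le_const_mul_self n.cast_nonneg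
  have hR : ∀ u : ℝ, 1 < u → ‖((Chebyshev.psi u / u : ℝ) : ℂ)‖ ≤ Real.log 4 + 4 := fun u hu => by
    have hu0 := zero_lt_one.trans hu
    rw [norm_real, Real.norm_of_nonneg (div_nonneg (Chebyshev.psi_nonneg u) hu0.le),
      div_le_iff₀ hu0]
    exact Chebyshev.psi_le_const_mul_self hu0.le
  have hcongr : ∀ u ∈ Ioi (1 : ℝ), (∑ k ∈ Finset.Icc 1 ⌊u⌋₊, (Λ k : ℂ)) * (u : ℂ) ^ (-(σ + 1 : ℂ))
      = ((Chebyshev.psi u / u : ℝ) : ℂ) * (u : ℂ) ^ (-(((σ - 1 : ℝ) : ℂ) + 1)) := fun u hu => by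
    have hu0 : (u : ℂ) ≠ 0 := ofReal_ne_zero.mpr (zero_lt_one.trans hu).ne'
    rw [← ofReal_sum, hpsi, show -(σ + 1 : ℂ) = -1 + -(((σ - 1 : ℝ) : ℂ) + 1) by push_cast; ring,
      cpow_add _ _ hu0, cpow_neg_one, ofReal_div]
    ring
  have hL : ((∑' n : ℕ, Λ n / (n : ℝ) ^ σ : ℝ) : ℂ)
      = σ * ∫ u in Ioi (1 : ℝ), ((Chebyshev.psi u / u : ℝ) : ℂ) *
          (u : ℂ) ^ (-(((σ - 1 : ℝ) : ℂ) + 1)) := by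
    rw [ofReal_tsum, ← setIntegral_congr_fun measurableSet_Ioi hcongr,
      ← LSeries_eq_mul_integral_of_nonneg _ zero_le_one (by simpa using hσ) hO
        fun n => ArithmeticFunction.vonMangoldt_nonneg]
    exact tsum_congr fun n => (term_vonMangoldt_ofReal σ n).symm
  calc ∑' n : ℕ, Λ n / (n : ℝ) ^ σ ≤ ‖((∑' n : ℕ, Λ n / (n : ℝ) ^ σ : ℝ) : ℂ)‖ := by
        rw [norm_real]
        exact le_abs_self _
    _ ≤ σ * ((Real.log 4 + 4) / (σ - 1)) := by
        rw [hL, norm_mul, norm_real, Real.norm_of_nonneg (by linarith)]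
        gcongr
        exact norm_integral_Ioi_mul_cpow_le hR (by simpa using hσ)

lemma norm_logDeriv_entireLFunction_le_of_one_lt_re {q : ℕ} [NeZero q] (χ : DirichletCharacter ℂ q)
    {s : ℂ} (hs : 1 < s.re) :
    ‖logDeriv (entireLFunction χ) s‖ ≤ s.re * ((Real.log 4 + 5) / (s.re - 1)) := by
  have hterm : ∀ n, ‖LSeries.term ((fun n : ℕ => χ n) * fun n : ℕ => (Λ n : ℂ)) s n‖
      ≤ Λ n / (n : ℝ) ^ s.re := fun n => by
    have hΛ : (0 : ℝ) ≤ Λ n := ArithmeticFunction.vonMangoldt_nonneg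
    rw [LSeries.norm_term_eq]
    split_ifs with hn
    · simp [hn]
    · gcongr
      rw [Pi.mul_apply, norm_mul, norm_real, Real.norm_of_nonneg hΛ]
      exact mul_le_of_le_one_left hΛ (χ.norm_le_one _)
  have hL : ‖LSeries ((fun n : ℕ => χ n) * fun n : ℕ => (Λ n : ℂ)) s‖
      ≤ s.re * ((Real.log 4 + 4) / (s.re - 1)) :=
    (tsum_of_norm_bounded (summable_vonMangoldt_div_rpow hs).hasSum hterm).trans
      (tsum_vonMangoldt_div_rpow_le hs)
  have hpole : ‖(poleOrder χ : ℂ) / (s - 1)‖ ≤ s.re * (1 / (s.re - 1)) := by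
    have hk : (poleOrder χ : ℝ) ≤ s.re := le_trans (mod_cast poleOrder_le_one χ) hs.le
    have hsub : s.re - 1 ≤ ‖s - 1‖ := by simpa using re_le_norm (s - 1)
    have := sub_pos.mpr hs
    rw [norm_div, norm_natCast, mul_one_div]
    gcongr
  calc ‖logDeriv (entireLFunction χ) s‖
      ≤ s.re * ((Real.log 4 + 4) / (s.re - 1)) + s.re * (1 / (s.re - 1)) := by
        rw [← norm_neg, neg_logDeriv_entireLFunction χ hs]
        exact norm_sub_le_of_le hL hpole
    _ = s.re * ((Real.log 4 + 5) / (s.re - 1)) := by ring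

end VonMangoldt

section PoissonKernel

open Complex MeasureTheory Set

variable {a b σ : ℝ}

lemma integral_poissonKernel_le {ε : ℝ} (hε : 0 < ε) (γ : ℝ) (hab : a ≤ b) :
    ∫ t in a..b, ε / (ε ^ 2 + (t - γ) ^ 2) ≤ Real.pi := by
  have hscale : (fun t : ℝ => ε / (ε ^ 2 + (t - γ) ^ 2))
      = fun t : ℝ => (1 / ε) * (1 + ((t - γ) / ε) ^ 2)⁻¹ := by
    ext t
    field_simp
  have hint : Integrable fun t : ℝ => (1 / ε) * (1 + ((t - γ) / ε) ^ 2)⁻¹ :=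
    ((integrable_inv_one_add_sq.comp_div hε.ne').comp_sub_right γ).const_mul _
  rw [hscale, intervalIntegral.integral_of_le hab]
  refine (setIntegral_le_integral hint (ae_of_all _ fun t => by positivity)).trans_eq ?_
  rw [integral_const_mul, integral_sub_right_eq_self (fun t : ℝ => (1 + (t / ε) ^ 2)⁻¹) γ,
    Measure.integral_comp_div (fun t : ℝ => (1 + t ^ 2)⁻¹) ε, integral_univ_inv_one_add_sq,
    abs_of_pos hε, smul_eq_mul, ← mul_assoc, one_div_mul_cancel hε.ne', one_mul]

lemma re_one_div_add_mul_I_sub (σ t : ℝ) (ρ : ℂ) :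
    (1 / (σ + t * I - ρ)).re = (σ - ρ.re) / ((σ - ρ.re) ^ 2 + (t - ρ.im) ^ 2) := by
  rw [one_div, inv_re, normSq_apply]
  simp [pow_two]

lemma integral_abs_re_le_of_norm_sub_sum_le {ι : Type*} [Fintype ι] {ρ : ι → ℂ} {F : ℝ → ℂ} {E : ℝ}
    (hab : a ≤ b) (hρ : ∀ i, (ρ i).re < σ) (hF : Continuous F)
    (hE : ∀ t ∈ Icc a b, ‖F t - ∑ i, 1 / (σ + t * I - ρ i)‖ ≤ E) :
    ∫ t in a..b, |(F t).re| ≤ Fintype.card ι * Real.pi + E * (b - a) := by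
  set P : ι → ℝ → ℝ := fun i t => (σ - (ρ i).re) / ((σ - (ρ i).re) ^ 2 + (t - (ρ i).im) ^ 2)
  have hσ : ∀ i, 0 < σ - (ρ i).re := fun i => sub_pos.mpr (hρ i)
  have hPint : ∀ i, IntervalIntegrable (P i) volume a b := fun i =>
    (continuous_const.div (by fun_prop) fun t =>
      (add_pos_of_pos_of_nonneg (pow_pos (hσ i) 2) (sq_nonneg _)).ne').intervalIntegrable _ _
  have hpt : ∀ t ∈ Icc a b, |(F t).re| ≤ ∑ i, P i t + E := fun t ht => by
    have hre := (abs_re_le_norm _).trans (hE t ht)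
    rw [sub_re, re_sum] at hre
    simp_rw [re_one_div_add_mul_I_sub] at hre
    have hP0 : 0 ≤ ∑ i, P i t := Finset.sum_nonneg fun i _ => by
      have := hσ i
      positivity
    rw [abs_le] at hre ⊢
    constructor <;> linarith [hre.1, hre.2]
  have hsum : IntervalIntegrable (fun t => ∑ i, P i t) volume a b := by
    simpa only [Finset.sum_fn] using IntervalIntegrable.sum Finset.univ fun i _ => hPint i
  calc ∫ t in a..b, |(F t).re| ≤ ∫ t in a..b, (∑ i, P i t + E) :=
        intervalIntegral.integral_mono_on hab ((continuous_re.comp hF).abs.intervalIntegrable _ _)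
          (hsum.add (by simp)) hpt
    _ = ∑ i, (∫ t in a..b, P i t) + E * (b - a) := by
        rw [intervalIntegral.integral_add hsum (by simp),
          intervalIntegral.integral_finsetSum fun i _ => hPint i, intervalIntegral.integral_const,
          smul_eq_mul, mul_comm (b - a)]
    _ ≤ ∑ _i : ι, Real.pi + E * (b - a) := by
        gcongr with i
        exact integral_poissonKernel_le (hσ i) _ hab
    _ = Fintype.card ι * Real.pi + E * (b - a) := by
        rw [Finset.sum_const, Finset.card_univ, nsmul_eq_mul]

end PoissonKernel

section LogDerivUnderRH

open Complex Set Metric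

lemma exists_norm_logDeriv_entireLFunction_sub_sum_le :
    ∃ C > 0, ∀ {q : ℕ} [NeZero q] {χ : DirichletCharacter ℂ q}, RiemannHypothesisFor χ → ∀ t₀ : ℝ,
      ∃ n : ℕ, n ≤ C * Real.log (q * (|t₀| + 5)) ∧ ∃ ρ : Fin n → ℂ, (∀ i, (ρ i).re = 1 / 2) ∧
        ∀ z ∈ closedBall (2 + t₀ * I) (8 / 5), 1 / 2 < z.re →
          ‖logDeriv (entireLFunction χ) z - ∑ i, 1 / (z - ρ i)‖
            ≤ C * Real.log (q * (|t₀| + 5)) := by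
  obtain ⟨C, hC, h⟩ := exists_norm_logDeriv_sub_sum_le (r := 8 / 5) (r' := 17 / 10) (R := 7 / 4)
    (by norm_num) (by norm_num) (by norm_num)
  refine ⟨C * 5, by positivity, fun {q _ χ} hχ t₀ => ?_⟩
  set c : ℂ := 2 + t₀ * I with hc
  have hcre : c.re = 2 := by simp [hc]
  have hcim : c.im = t₀ := by simp [hc]
  have hlog : 1 ≤ 5 * Real.log (q * (|t₀| + 5)) := by
    have hq := one_le_natCast_of_neZero q
    have : Real.log 5 ≤ Real.log (q * (|t₀| + 5)) :=
      Real.log_le_log (by norm_num) (by nlinarith [abs_nonneg t₀])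
    linarith [Real.log_two_gt_d9, Real.log_le_log two_pos (by norm_num : (2 : ℝ) ≤ 5)]
  obtain ⟨n, hn, ρ, hρ, hsum⟩ := h (entireLFunction χ) c (5 * Real.log (q * (|t₀| + 5)))
    (differentiable_entireLFunction χ).diffContOnCl hlog
    (entireLFunction_ne_zero_of_one_le_re χ (by rw [hcre]; norm_num))
    (fun z hz => hcim ▸ norm_entireLFunction_le_mul_exp χ hcre hz)
  refine ⟨n, by rwa [mul_assoc], ρ, fun i => hχ.re_eq_half ?_ (hρ i).2, fun z hz hzre => ?_⟩
  · have hre := (abs_re_le_norm (ρ i - c)).trans (mem_closedBall_iff_norm.mp (hρ i).1)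
    rw [sub_re, hcre, abs_le] at hre
    linarith
  · rw [mul_assoc]
    exact hsum z hz fun h0 => hzre.ne' (hχ.re_eq_half (by linarith) h0)

lemma log_natCast_mul_abs_add_five_le (q : ℕ) [NeZero q] (t : ℝ) :
    Real.log (q * (|t| + 5)) ≤ 2 * √(5 * q) * (1 + |t|) ^ (1 / 2 : ℝ) := by
  have hq := one_le_natCast_of_neZero q
  have ht := abs_nonneg t
  calc Real.log (q * (|t| + 5)) ≤ Real.log (5 * q * (1 + |t|)) :=
        Real.log_le_log (by positivity) (by nlinarith)
    _ = 2 * Real.log √(5 * q * (1 + |t|)) := by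
        rw [Real.log_sqrt (by positivity)]
        ring
    _ ≤ 2 * √(5 * q * (1 + |t|)) := by
        gcongr
        exact Real.log_le_self (Real.sqrt_nonneg _)
    _ = 2 * √(5 * q) * (1 + |t|) ^ (1 / 2 : ℝ) := by
        rw [← Real.sqrt_eq_rpow, Real.sqrt_mul (by positivity), mul_assoc]

lemma RiemannHypothesisFor.exists_norm_logDeriv_le {q : ℕ} [NeZero q] {χ : DirichletCharacter ℂ q}
    (hχ : RiemannHypothesisFor χ) {ε : ℝ} (hε : 0 < ε) :
    ∃ C, 0 ≤ C ∧ ∀ s : ℂ, 1 / 2 + ε ≤ s.re → s.re ≤ 2 →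
      ‖logDeriv (entireLFunction χ) s‖ ≤ C * (1 + |s.im|) ^ (1 / 2 : ℝ) := by
  obtain ⟨C, hC, h⟩ := exists_norm_logDeriv_entireLFunction_sub_sum_le
  refine ⟨(C + C / ε) * (2 * √(5 * q)), by positivity, fun s hs hs2 => ?_⟩
  obtain ⟨n, hn, ρ, hρ, hsum⟩ := h hχ s.im
  set L := Real.log (q * (|s.im| + 5))
  have hball : s ∈ closedBall (2 + s.im * I) (8 / 5) := by
    have hsub : s - (2 + s.im * I) = ((s.re - 2 : ℝ) : ℂ) := by apply Complex.ext <;> simp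
    rw [mem_closedBall_iff_norm, hsub, norm_real, Real.norm_eq_abs, abs_le]
    constructor <;> linarith
  have hzeros : ‖∑ i, 1 / (s - ρ i)‖ ≤ n * (1 / ε) := by
    have hone : ∀ i ∈ Finset.univ, ‖1 / (s - ρ i)‖ ≤ 1 / ε := fun i _ => by
      rw [norm_div, norm_one]
      refine one_div_le_one_div_of_le hε (le_trans ?_ (re_le_norm _))
      rw [sub_re, hρ i]
      linarith
    exact (norm_sum_le_of_le _ hone).trans_eq (by simp)
  calc ‖logDeriv (entireLFunction χ) s‖
      ≤ ‖∑ i, 1 / (s - ρ i)‖ + ‖logDeriv (entireLFunction χ) s - ∑ i, 1 / (s - ρ i)‖ :=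
        norm_le_norm_add_norm_sub' _ _
    _ ≤ C * L * (1 / ε) + C * L := by
        gcongr
        · exact hzeros.trans (by gcongr)
        · exact hsum s hball (by linarith)
    _ = (C + C / ε) * L := by ring
    _ ≤ (C + C / ε) * (2 * √(5 * q) * (1 + |s.im|) ^ (1 / 2 : ℝ)) := by
        gcongr
        exact log_natCast_mul_abs_add_five_le q s.im
    _ = (C + C / ε) * (2 * √(5 * q)) * (1 + |s.im|) ^ (1 / 2 : ℝ) := by ring

lemma continuous_vertical_of_differentiableAt {Φ : ℂ → ℂ} {σ : ℝ}
    (hΦ : ∀ s : ℂ, s.re = σ → DifferentiableAt ℂ Φ s) : Continuous fun t : ℝ => Φ (σ + t * I) :=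
  continuous_iff_continuousAt.mpr fun t =>
    (hΦ (σ + t * I) (by simp)).continuousAt.comp (f := fun t : ℝ => (σ + t * I : ℂ)) (by fun_prop)

lemma RiemannHypothesisFor.continuous_logDeriv_vertical {q : ℕ} [NeZero q]
    {χ : DirichletCharacter ℂ q} (hχ : RiemannHypothesisFor χ) {σ : ℝ} (hσ : 1 / 2 < σ) :
    Continuous fun t : ℝ => logDeriv (entireLFunction χ) (σ + t * I) :=
  continuous_vertical_of_differentiableAt fun _ hs => hχ.differentiableAt_logDeriv (hs ▸ hσ)

lemma exists_integral_abs_re_logDeriv_entireLFunction_le :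
    ∃ C > 0, ∀ {q : ℕ} [NeZero q] {χ : DirichletCharacter ℂ q}, RiemannHypothesisFor χ →
      ∀ {σ : ℝ}, 1 / 2 < σ → σ ≤ 1 → ∀ t₀ : ℝ,
        ∫ t in (t₀ - 1 / 2)..(t₀ + 1 / 2), |(logDeriv (entireLFunction χ) (σ + t * I)).re|
          ≤ C * Real.log (q * (|t₀| + 5)) := by
  obtain ⟨C, hC, h⟩ := exists_norm_logDeriv_entireLFunction_sub_sum_le
  refine ⟨C * Real.pi + C, by positivity, fun {q _ χ} hχ σ hσ hσ1 t₀ => ?_⟩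
  obtain ⟨n, hn, ρ, hρ, hsum⟩ := h hχ t₀
  set L := Real.log (q * (|t₀| + 5))
  have hball : ∀ t ∈ Icc (t₀ - 1 / 2) (t₀ + 1 / 2),
      (σ + t * I : ℂ) ∈ closedBall (2 + t₀ * I) (8 / 5) := fun t ht => by
    have hnorm : ‖(σ + t * I : ℂ) - (2 + t₀ * I)‖ ^ 2 = (σ - 2) ^ 2 + (t - t₀) ^ 2 := by
      rw [← normSq_eq_norm_sq, normSq_apply]
      simp [pow_two]
    have ht2 : (t - t₀) ^ 2 ≤ (1 / 2) ^ 2 := sq_le_sq' (by linarith [ht.1]) (by linarith [ht.2])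
    rw [mem_closedBall_iff_norm]
    refine le_of_sq_le_sq ?_ (by norm_num)
    rw [hnorm]
    nlinarith
  calc ∫ t in (t₀ - 1 / 2)..(t₀ + 1 / 2), |(logDeriv (entireLFunction χ) (σ + t * I)).re|
      ≤ Fintype.card (Fin n) * Real.pi + C * L * (t₀ + 1 / 2 - (t₀ - 1 / 2)) :=
        integral_abs_re_le_of_norm_sub_sum_le (by linarith) (fun i => by rw [hρ i]; exact hσ)
          (hχ.continuous_logDeriv_vertical hσ)
          fun t ht => hsum _ (hball t ht) (by simpa using hσ)
    _ ≤ C * L * Real.pi + C * L * (t₀ + 1 / 2 - (t₀ - 1 / 2)) := by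
        rw [Fintype.card_fin]
        gcongr
    _ = (C * Real.pi + C) * L := by ring

end LogDerivUnderRH

section RieszMeans

open Complex MeasureTheory Set

variable {c x y : ℝ}

lemma hasMellin_of_eqOn {f g : ℝ → ℂ} {s m : ℂ} (hf : HasMellin f s m) (hfg : EqOn f g (Ioi 0)) :
    HasMellin g s m := by
  have hcongr : EqOn (fun t : ℝ => (t : ℂ) ^ (s - 1) • f t) (fun t : ℝ => (t : ℂ) ^ (s - 1) • g t)
      (Ioi 0) := fun t ht => by simp only [hfg ht]
  exact ⟨hf.1.congr_fun hcongr measurableSet_Ioi,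
    (setIntegral_congr_fun measurableSet_Ioi hcongr).symm.trans hf.2⟩

lemma integral_cpow_neg_mul_eq {f : ℝ → ℂ} {F : ℂ → ℂ} (hx : 0 < x)
    (hf : ∀ t : ℝ, HasMellin f (c + t * I) (F (c + t * I)))
    (hF : Integrable fun t : ℝ => F (c + t * I)) (hcont : ContinuousAt f x) :
    ∫ t : ℝ, (x : ℂ) ^ (-(c + t * I) : ℂ) * F (c + t * I) = 2 * Real.pi * f x := by
  have hmellin : ∀ t : ℝ, mellin f (c + t * I) = F (c + t * I) := fun t => (hf t).2
  have hinv := mellinInv_mellin_eq c f hx (by simpa using (hf 0).1)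
    (by simpa only [VerticalIntegrable, hmellin] using hF) hcont
  simp only [mellinInv, hmellin, smul_eq_mul, real_smul] at hinv
  rw [← hinv, ← mul_assoc]
  push_cast
  rw [mul_one_div_cancel (by simp [Real.pi_ne_zero]), one_mul]

lemma hasMellin_max_one_sub {s : ℂ} (hs : 0 < s.re) :
    HasMellin (fun u : ℝ => ((max (1 - u) 0 : ℝ) : ℂ)) s (1 / (s * (s + 1))) := by
  have hone := hasMellin_one_Ioc hs
  have hid := hasMellin_cpow_Ioc 1 (s := s) (by simp; linarith)
  have hsub := hasMellin_sub hone.1 hid.1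
  have hs0 : s ≠ 0 := ne_zero_of_re_pos hs
  have hs1 : s + 1 ≠ 0 := ne_zero_of_re_pos (by simp; linarith)
  rw [hone.2, hid.2, show 1 / s - 1 / (s + 1) = 1 / (s * (s + 1)) by field_simp; ring] at hsub
  refine hasMellin_of_eqOn hsub fun u hu => ?_
  by_cases hmem : u ∈ Ioc (0 : ℝ) 1
  · simp [hmem, hmem.2]
  · have : 1 ≤ u := le_of_not_ge fun h => hmem ⟨hu, h⟩
    simp [hmem, this]

lemma hasMellin_max_one_sub_sq_div {s : ℂ} (hs : 1 < s.re) :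
    HasMellin (fun u : ℝ => ((max (1 - u) 0 ^ 2 / (2 * u) : ℝ) : ℂ)) s
      (1 / (s * (s + 1)) * (1 / (s - 1))) := by
  have hinv := hasMellin_cpow_Ioc (-1) (s := s) (by simp; linarith)
  have hone := hasMellin_one_Ioc (s := s) (by linarith)
  have hid := hasMellin_cpow_Ioc 1 (s := s) (by simp; linarith)
  have hinv' := hasMellin_const_smul hinv.1 (1 / 2 : ℂ)
  have hid' := hasMellin_const_smul hid.1 (1 / 2 : ℂ)
  have hsub := hasMellin_sub hinv'.1 hone.1
  have hsum := hasMellin_add hsub.1 hid'.1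
  have hs0 : s ≠ 0 := ne_zero_of_re_pos (by linarith)
  have hs1 : s + 1 ≠ 0 := ne_zero_of_re_pos (by simp; linarith)
  have hs2 : s - 1 ≠ 0 := ne_zero_of_re_pos (by simp; linarith)
  have hfrac : (1 / 2 : ℂ) • (1 / (s + -1)) - 1 / s + (1 / 2 : ℂ) • (1 / (s + 1))
      = 1 / (s * (s + 1)) * (1 / (s - 1)) := by
    rw [smul_eq_mul, smul_eq_mul, ← sub_eq_add_neg]
    field_simp
    ring
  rw [hsub.2, hid'.2, hinv'.2, hone.2, hid.2, hinv.2, hfrac] at hsum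
  refine hasMellin_of_eqOn hsum fun u (hu : 0 < u) => ?_
  by_cases hmem : u ∈ Ioc (0 : ℝ) 1
  · have hu0 : (u : ℂ) ≠ 0 := ofReal_ne_zero.mpr hu.ne'
    simp only [indicator_of_mem hmem, smul_eq_mul, cpow_one, cpow_neg_one,
      max_eq_left (sub_nonneg.mpr hmem.2)]
    push_cast
    field_simp
    ring
  · have : 1 ≤ u := le_of_not_ge fun h => hmem ⟨hu, h⟩
    simp [hmem, this]

lemma norm_add_mul_I_sq (c t : ℝ) : ‖(c + t * I : ℂ)‖ ^ 2 = c ^ 2 + t ^ 2 := by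
  rw [← normSq_eq_norm_sq, normSq_add_mul_I]

lemma norm_le_norm_add_one {s : ℂ} (hs : 0 ≤ s.re) : ‖s‖ ≤ ‖s + 1‖ := by
  refine abs_le_of_sq_le_sq' ?_ (norm_nonneg _) |>.2
  rw [← normSq_eq_norm_sq, ← normSq_eq_norm_sq, normSq_apply, normSq_apply, add_re, add_im, one_re,
    one_im]
  nlinarith

lemma integrable_inv_sq_add_sq (hc : 0 < c) : Integrable fun t : ℝ => (c ^ 2 + t ^ 2)⁻¹ := by
  refine ((integrable_inv_one_add_sq.comp_div hc.ne').const_mul (c ^ 2)⁻¹).congr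
    (ae_of_all _ fun t => ?_)
  simp only
  field_simp

lemma integrable_one_div_mul_add_one (hc : 0 < c) :
    Integrable fun t : ℝ => 1 / ((c + t * I : ℂ) * (c + t * I + 1)) := by
  refine (integrable_inv_sq_add_sq hc).mono' (Continuous.aestronglyMeasurable ?_)
    (ae_of_all _ fun t => ?_)
  · exact continuous_const.div (by fun_prop) fun t => mul_ne_zero
      (ne_zero_of_re_pos (by simpa using hc)) (ne_zero_of_re_pos (by simp; linarith))
  · rw [norm_div, norm_one, norm_mul, one_div, ← norm_add_mul_I_sq, sq]
    have hpos : 0 < ‖(c + t * I : ℂ)‖ := norm_pos_iff.mpr (ne_zero_of_re_pos (by simpa using hc))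
    gcongr
    exact norm_le_norm_add_one (by simpa using hc.le)

lemma integrable_mul_one_div_vertical_sub_one {F : ℝ → ℂ} (hF : Integrable F) (hc : 1 < c) :
    Integrable fun t : ℝ => F t * (1 / ((c + t * I : ℂ) - 1)) := by
  have : 0 < c - 1 := sub_pos.mpr hc
  refine hF.mul_bdd (c := 1 / (c - 1)) (Continuous.aestronglyMeasurable ?_)
    (ae_of_all _ fun t => ?_)
  · exact continuous_const.div (by fun_prop) fun t => ne_zero_of_re_pos (by simpa using hc)
  · rw [norm_div, norm_one]
    gcongr
    simpa using re_le_norm ((c : ℂ) + t * I - 1)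

/-- The Mellin kernel `y ^ (s + 1) / (s (s + 1))` of the first Riesz mean `∑ n ≤ y, f n * (y - n)`
of an arithmetic function `f`. -/
noncomputable def rieszKernel (y : ℝ) (s : ℂ) : ℂ := (y : ℂ) ^ (s + 1) / (s * (s + 1))

lemma norm_rieszKernel (hy : 0 < y) (s : ℂ) :
    ‖rieszKernel y s‖ = y ^ (s.re + 1) / (‖s‖ * ‖s + 1‖) := by
  rw [rieszKernel, norm_div, norm_mul, norm_cpow_eq_rpow_re_of_pos hy, add_re, one_re]

lemma integrable_rieszKernel (hc : 0 < c) (hy : 0 < y) :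
    Integrable fun t : ℝ => rieszKernel y (c + t * I) := by
  unfold rieszKernel
  simp_rw [div_eq_mul_one_div ((y : ℂ) ^ (_ : ℂ))]
  refine (integrable_one_div_mul_add_one hc).bdd_mul (c := y ^ (c + 1))
    (Continuous.aestronglyMeasurable ?_) (ae_of_all _ fun t => ?_)
  · exact Continuous.const_cpow (by fun_prop) (.inl (ofReal_ne_zero.mpr hy.ne'))
  · rw [norm_cpow_eq_rpow_re_of_pos hy]
    simp

lemma rieszKernel_mul_cpow_neg (hy : 0 < y) (hx : 0 < x) (s : ℂ) :
    rieszKernel y s * (x : ℂ) ^ (-s)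
      = y * (((x / y : ℝ) : ℂ) ^ (-s) * (1 / (s * (s + 1)))) := by
  have hyarg : (y : ℂ).arg ≠ Real.pi := by
    rw [arg_ofReal_of_nonneg hy.le]
    exact Real.pi_pos.ne
  rw [rieszKernel, cpow_add _ _ (ofReal_ne_zero.mpr hy.ne'), cpow_one, div_eq_mul_inv x y,
    ofReal_mul, mul_cpow_ofReal_nonneg hx.le (by positivity), ofReal_inv, inv_cpow _ _ hyarg,
    cpow_neg (y : ℂ), inv_inv]
  ring

lemma integral_rieszKernel_mul_cpow_neg (hc : 0 < c) (hy : 0 < y) (hx : 0 < x) :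
    ∫ t : ℝ, rieszKernel y (c + t * I) * (x : ℂ) ^ (-(c + t * I) : ℂ)
      = 2 * Real.pi * max (y - x) 0 := by
  have hmax : max (y - x) 0 = y * max (1 - x / y) 0 := by
    rw [mul_max_of_nonneg _ _ hy.le, mul_sub, mul_div_cancel₀ _ hy.ne', mul_one, mul_zero]
  simp_rw [rieszKernel_mul_cpow_neg hy hx]
  rw [integral_const_mul, integral_cpow_neg_mul_eq (F := fun s => 1 / (s * (s + 1))) (by positivity)
    (fun t => hasMellin_max_one_sub (by simpa using hc)) (integrable_one_div_mul_add_one hc)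
    (by fun_prop), hmax]
  push_cast
  ring

lemma integral_rieszKernel_div_sub_one (hc : 1 < c) (hy : 1 ≤ y) :
    ∫ t : ℝ, rieszKernel y (c + t * I) / ((c + t * I : ℂ) - 1)
      = 2 * Real.pi * ((y - 1) ^ 2 / 2) := by
  have hy0 : 0 < y := by linarith
  have hkernel : ∀ t : ℝ, rieszKernel y (c + t * I) / ((c + t * I : ℂ) - 1)
      = y * (((1 / y : ℝ) : ℂ) ^ (-(c + t * I) : ℂ) *
        (1 / ((c + t * I : ℂ) * (c + t * I + 1)) * (1 / ((c + t * I : ℂ) - 1)))) := fun t => by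
    have h := rieszKernel_mul_cpow_neg hy0 one_pos (c + t * I)
    rw [ofReal_one, one_cpow, mul_one] at h
    rw [h]
    ring
  have hcont : ContinuousAt (fun u : ℝ => ((max (1 - u) 0 ^ 2 / (2 * u) : ℝ) : ℂ)) (1 / y) :=
    continuous_ofReal.continuousAt.comp
      (ContinuousAt.div (by fun_prop) (by fun_prop) (by positivity))
  have hmax : max (1 - 1 / y) 0 = 1 - 1 / y :=
    max_eq_left (sub_nonneg.mpr ((div_le_one hy0).mpr hy))
  simp_rw [hkernel]
  rw [integral_const_mul, integral_cpow_neg_mul_eq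
    (F := fun s => 1 / (s * (s + 1)) * (1 / (s - 1))) (by positivity)
    (fun t => hasMellin_max_one_sub_sq_div (by simpa using hc))
    (integrable_mul_one_div_vertical_sub_one (integrable_one_div_mul_add_one (by linarith)) hc)
    hcont, hmax]
  have hyc : (y : ℂ) ≠ 0 := ofReal_ne_zero.mpr hy0.ne'
  push_cast
  field_simp

lemma norm_term_add_mul_I (f : ℕ → ℂ) (c t : ℝ) (n : ℕ) :
    ‖LSeries.term f (c + t * I) n‖ = ‖LSeries.term f c n‖ := by
  simp [LSeries.norm_term_eq]

lemma term_eq_mul_ofReal_cpow_neg (f : ℕ → ℂ) (s : ℂ) {n : ℕ} (hn : n ≠ 0) :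
    LSeries.term f s n = f n * ((n : ℝ) : ℂ) ^ (-s) := by
  rw [LSeries.term_of_ne_zero hn, cpow_neg, ofReal_natCast, div_eq_mul_inv]

lemma continuous_term_vertical (f : ℕ → ℂ) (c : ℝ) (n : ℕ) :
    Continuous fun t : ℝ => LSeries.term f (c + t * I) n := by
  rcases eq_or_ne n 0 with rfl | hn
  · simpa only [LSeries.term_zero] using continuous_const
  · simp_rw [term_eq_mul_ofReal_cpow_neg f _ hn]
    exact continuous_const.mul (Continuous.const_cpow (by fun_prop) (.inl (by exact_mod_cast hn)))

lemma integral_rieszKernel_mul_term {f : ℕ → ℂ} (hf0 : f 0 = 0) (hc : 0 < c) (hy : 0 < y) (n : ℕ) :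
    ∫ t : ℝ, rieszKernel y (c + t * I) * LSeries.term f (c + t * I) n
      = 2 * Real.pi * (f n * (max (y - n) 0 : ℝ)) := by
  rcases eq_or_ne n 0 with rfl | hn
  · simp [hf0]
  · simp_rw [term_eq_mul_ofReal_cpow_neg f _ hn, mul_left_comm _ (f n)]
    rw [integral_const_mul, integral_rieszKernel_mul_cpow_neg hc hy (by positivity), mul_left_comm]

lemma hasSum_mul_max_sub_of_LSeriesSummable {f : ℕ → ℂ} (hf0 : f 0 = 0) (hc : 0 < c) (hy : 0 < y)
    (hf : LSeriesSummable f c) :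
    HasSum (fun n : ℕ => (2 * Real.pi * (f n * (max (y - n) 0 : ℝ)) : ℂ))
      (∫ t : ℝ, rieszKernel y (c + t * I) * LSeries f (c + t * I)) := by
  have hK := integrable_rieszKernel hc hy
  set F : ℕ → ℝ → ℂ := fun n t => rieszKernel y (c + t * I) * LSeries.term f (c + t * I) n
  have hFnorm : ∀ n t, ‖F n t‖ = ‖rieszKernel y (c + t * I)‖ * ‖LSeries.term f c n‖ := fun n t => by
    rw [norm_mul, norm_term_add_mul_I]
  have hFint : ∀ n, Integrable (F n) := fun n =>
    (hK.norm.mul_const ‖LSeries.term f c n‖).mono'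
      (hK.aestronglyMeasurable.mul (continuous_term_vertical f c n).aestronglyMeasurable)
      (ae_of_all _ fun t => (hFnorm n t).le)
  have hFsum : Summable fun n => ∫ t, ‖F n t‖ := by
    simp_rw [hFnorm, integral_mul_const]
    exact hf.norm.mul_left _
  simpa only [F, integral_rieszKernel_mul_term hf0 hc hy, tsum_mul_left, LSeries] using
    hasSum_integral_of_summable_integral_norm hFint hFsum

end RieszMeans

section ContourShift

open Complex MeasureTheory Set Filter Topology ComplexConjugate

variable {σ σ₁ σ₂ : ℝ}

lemma integrable_vertical_of_norm_le {Φ : ℂ → ℂ} {C p : ℝ} (hp : 1 < p)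
    (hd : ∀ s : ℂ, s.re = σ → DifferentiableAt ℂ Φ s)
    (hb : ∀ s : ℂ, s.re = σ → ‖Φ s‖ ≤ C * (1 + |s.im|) ^ (-p)) :
    Integrable fun t : ℝ => Φ (σ + t * I) := by
  have hmaj : Integrable fun t : ℝ => C * (1 + ‖t‖) ^ (-p) :=
    (integrable_one_add_norm (by simpa using hp)).const_mul C
  exact hmaj.mono' (continuous_vertical_of_differentiableAt hd).aestronglyMeasurable
    (ae_of_all _ fun t => by simpa using hb (σ + t * I) (by simp))

lemma tendsto_integral_horizontal_zero {Φ : ℂ → ℂ} {C p : ℝ} (hσ : σ₁ ≤ σ₂) (hp : 0 < p)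
    (hb : ∀ s : ℂ, σ₁ ≤ s.re → s.re ≤ σ₂ → ‖Φ s‖ ≤ C * (1 + |s.im|) ^ (-p)) {τ : ℝ → ℝ}
    (hτ : ∀ T, |τ T| = |T|) :
    Tendsto (fun T : ℝ => ∫ u in σ₁..σ₂, Φ (u + τ T * I)) atTop (𝓝 0) := by
  have hdecay : Tendsto (fun T : ℝ => C * (1 + |T|) ^ (-p) * |σ₂ - σ₁|) atTop (𝓝 0) := by
    have hpow : Tendsto (fun T : ℝ => (1 + |T|) ^ (-p)) atTop (𝓝 0) :=
      (tendsto_rpow_neg_atTop hp).comp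
        (tendsto_atTop_add_const_left _ _ tendsto_abs_atTop_atTop)
    simpa using (hpow.const_mul C).mul_const |σ₂ - σ₁|
  refine squeeze_zero_norm (fun T => ?_) hdecay
  refine intervalIntegral.norm_integral_le_of_norm_le_const fun u hu => ?_
  rw [uIoc_of_le hσ] at hu
  simpa [hτ] using hb (u + τ T * I) (by simpa using hu.1.le) (by simpa using hu.2)

lemma integral_vertical_eq {Φ : ℂ → ℂ} {C p : ℝ} (hσ : σ₁ ≤ σ₂) (hp : 1 < p)
    (hd : ∀ s : ℂ, σ₁ ≤ s.re → s.re ≤ σ₂ → DifferentiableAt ℂ Φ s)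
    (hb : ∀ s : ℂ, σ₁ ≤ s.re → s.re ≤ σ₂ → ‖Φ s‖ ≤ C * (1 + |s.im|) ^ (-p)) :
    ∫ t : ℝ, Φ (σ₁ + t * I) = ∫ t : ℝ, Φ (σ₂ + t * I) := by
  have hvert : ∀ σ, σ₁ ≤ σ → σ ≤ σ₂ → Tendsto (fun T : ℝ => ∫ t in (-T)..T, Φ (σ + t * I)) atTop
      (𝓝 (∫ t : ℝ, Φ (σ + t * I))) := fun σ h₁ h₂ =>
    intervalIntegral_tendsto_integral
      (integrable_vertical_of_norm_le hp (fun s hs => hd s (hs ▸ h₁) (hs ▸ h₂))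
        fun s hs => hb s (hs ▸ h₁) (hs ▸ h₂)) tendsto_neg_atTop_atBot tendsto_id
  have hhor := fun {τ : ℝ → ℝ} (hτ : ∀ T, |τ T| = |T|) =>
    tendsto_integral_horizontal_zero hσ (zero_lt_one.trans hp) hb hτ
  have hrect : ∀ T : ℝ, (∫ u in σ₁..σ₂, Φ (u + (-T : ℝ) * I)) - (∫ u in σ₁..σ₂, Φ (u + T * I))
      + I • (∫ t in (-T)..T, Φ (σ₂ + t * I)) - I • (∫ t in (-T)..T, Φ (σ₁ + t * I)) = 0 := by
    intro T
    have hrect' := Complex.integral_boundary_rect_eq_zero_of_differentiableOn Φ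
      (σ₁ + (-T : ℝ) * I) (σ₂ + T * I) fun s hs => by
        have hre : s.re ∈ uIcc σ₁ σ₂ := by simpa using (mem_reProdIm.mp hs).1
        rw [uIcc_of_le hσ] at hre
        exact (hd s hre.1 hre.2).differentiableWithinAt
    simpa using hrect'
  have hlim := (((hhor (τ := Neg.neg) abs_neg).sub (hhor (τ := id) fun _ => rfl)).add
    ((hvert σ₂ hσ le_rfl).const_smul I)).sub ((hvert σ₁ le_rfl hσ).const_smul I)
  simp_rw [id, hrect] at hlim
  have hzero := tendsto_nhds_unique hlim tendsto_const_nhds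
  rw [sub_zero, zero_add, ← smul_sub, smul_eq_zero_iff_right I_ne_zero] at hzero
  exact (sub_eq_zero.mp hzero).symm

variable {K G : ℂ → ℂ} {A B a b c : ℝ}

lemma norm_mul_le_mul_rpow {z w : ℂ} {t : ℝ} (hz : ‖z‖ ≤ A * (1 + |t|) ^ (-a))
    (hw : ‖w‖ ≤ B * (1 + |t|) ^ b) : ‖z * w‖ ≤ A * B * (1 + |t|) ^ (-(a - b)) := by
  calc ‖z * w‖ ≤ A * (1 + |t|) ^ (-a) * (B * (1 + |t|) ^ b) := by
        rw [norm_mul]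
        exact mul_le_mul hz hw (norm_nonneg _) ((norm_nonneg _).trans hz)
    _ = A * B * (1 + |t|) ^ (-(a - b)) := by
        rw [neg_sub, sub_eq_neg_add, Real.rpow_add (by positivity)]
        ring

lemma integral_mul_conj_eq_integral_reflection (hσc : σ ≤ c) (hab : 1 < a - b)
    (hK : ∀ s : ℂ, 2 * σ - c ≤ s.re → s.re ≤ σ → DifferentiableAt ℂ K s)
    (hG : ∀ s : ℂ, σ ≤ s.re → s.re ≤ c → DifferentiableAt ℂ G s)
    (hKb : ∀ s : ℂ, 2 * σ - c ≤ s.re → s.re ≤ σ → ‖K s‖ ≤ A * (1 + |s.im|) ^ (-a))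
    (hGb : ∀ s : ℂ, σ ≤ s.re → s.re ≤ c → ‖G s‖ ≤ B * (1 + |s.im|) ^ b) :
    ∫ t : ℝ, K (σ + t * I) * conj (G (σ + t * I))
      = ∫ t : ℝ, K ((2 * σ - c : ℝ) + t * I) * conj (G (c + t * I)) := by
  have hd : ∀ s : ℂ, σ ≤ s.re → s.re ≤ c →
      DifferentiableAt ℂ (fun s => K (2 * σ - s) * conj (G (conj s))) s := fun s hs₁ hs₂ => by
    refine DifferentiableAt.mul ?_ ?_
    · exact DifferentiableAt.comp s (hK _ (by simp; linarith) (by simp; linarith)) (by fun_prop)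
    · simpa only [Function.comp_def, conj_conj] using
        (hG (conj s) (by simpa using hs₁) (by simpa using hs₂)).conj_conj
  have hb : ∀ s : ℂ, σ ≤ s.re → s.re ≤ c →
      ‖K (2 * σ - s) * conj (G (conj s))‖ ≤ A * B * (1 + |s.im|) ^ (-(a - b)) := fun s hs₁ hs₂ => by
    refine norm_mul_le_mul_rpow ?_ ?_
    · simpa using hKb (2 * σ - s) (by simp; linarith) (by simp; linarith)
    · simpa using hGb (conj s) (by simpa using hs₁) (by simpa using hs₂)
  have hrefl : ∀ r t : ℝ, K (2 * σ - (r + t * I)) * conj (G (conj (r + t * I)))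
      = K ((2 * σ - r : ℝ) + (-t : ℝ) * I) * conj (G (r + (-t : ℝ) * I)) := fun r t => by
    congr 3
    · push_cast
      ring
    · simp
  have hshift := integral_vertical_eq hσc hab hd hb
  simp_rw [hrefl] at hshift
  rw [integral_neg_eq_self fun t : ℝ => K ((2 * σ - σ : ℝ) + t * I) * conj (G (σ + t * I)),
    integral_neg_eq_self fun t : ℝ => K ((2 * σ - c : ℝ) + t * I) * conj (G (c + t * I)),
    two_mul, add_sub_cancel_right] at hshift
  rwa [two_mul]

lemma integral_mul_eq_two_mul_sub {F H : ℝ → ℂ} (hF : Continuous F) (hH : Continuous H)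
    (hFH : Integrable fun t => F t * H t) :
    ∫ t, F t * H t = 2 * (∫ t, F t * ((H t).re : ℂ)) - ∫ t, F t * conj (H t) := by
  have hconj : Integrable fun t => F t * conj (H t) :=
    hFH.mono (hF.mul (continuous_conj.comp hH)).aestronglyMeasurable
      (ae_of_all _ fun t => by rw [norm_mul, norm_mul, RCLike.norm_conj])
  rw [eq_sub_iff_add_eq, ← integral_add hFH hconj, ← integral_const_mul]
  refine integral_congr_ae (ae_of_all _ fun t => ?_)
  simp only [← mul_add, add_conj]
  push_cast
  ring

/- On the line `Re s = σ` write `K G = 2 K Re G - K conj G`. The last term is the restriction of a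
function holomorphic to the left, so it can be moved away from the singularities of `G`. -/
lemma norm_integral_mul_le_integral_abs_re_add (hσc : σ ≤ c) (hab : 1 < a - b)
    (hK : ∀ s : ℂ, 2 * σ - c ≤ s.re → s.re ≤ c → DifferentiableAt ℂ K s)
    (hG : ∀ s : ℂ, σ ≤ s.re → s.re ≤ c → DifferentiableAt ℂ G s)
    (hKb : ∀ s : ℂ, 2 * σ - c ≤ s.re → s.re ≤ c → ‖K s‖ ≤ A * (1 + |s.im|) ^ (-a))
    (hGb : ∀ s : ℂ, σ ≤ s.re → s.re ≤ c → ‖G s‖ ≤ B * (1 + |s.im|) ^ b) :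
    ‖∫ t : ℝ, K (c + t * I) * G (c + t * I)‖
      ≤ 2 * (∫ t : ℝ, ‖K (σ + t * I)‖ * |(G (σ + t * I)).re|)
        + ∫ t : ℝ, ‖K ((2 * σ - c : ℝ) + t * I)‖ * ‖G (c + t * I)‖ := by
  have hd : ∀ s : ℂ, σ ≤ s.re → s.re ≤ c → DifferentiableAt ℂ (fun s => K s * G s) s :=
    fun s hs₁ hs₂ => (hK s (by linarith) hs₂).mul (hG s hs₁ hs₂)
  have hb : ∀ s : ℂ, σ ≤ s.re → s.re ≤ c → ‖K s * G s‖ ≤ A * B * (1 + |s.im|) ^ (-(a - b)) :=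
    fun s hs₁ hs₂ => norm_mul_le_mul_rpow (hKb s (by linarith) hs₂) (hGb s hs₁ hs₂)
  rw [← integral_vertical_eq hσc hab hd hb, integral_mul_eq_two_mul_sub
    (continuous_vertical_of_differentiableAt fun s hs => hK s (by linarith) (hs ▸ hσc))
    (continuous_vertical_of_differentiableAt fun s hs => hG s hs.ge (hs ▸ hσc))
    (integrable_vertical_of_norm_le hab (fun s hs => hd s hs.ge (hs ▸ hσc))
      fun s hs => hb s hs.ge (hs ▸ hσc)),
    integral_mul_conj_eq_integral_reflection hσc hab (fun s h₁ h₂ => hK s h₁ (h₂.trans hσc)) hG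
      (fun s h₁ h₂ => hKb s h₁ (h₂.trans hσc)) hGb]
  refine (norm_sub_le _ _).trans (add_le_add ?_ ?_)
  · rw [norm_mul, Complex.norm_ofNat]
    gcongr
    refine (norm_integral_le_integral_norm _).trans_eq ?_
    simp only [norm_mul, norm_real, Real.norm_eq_abs]
  · refine (norm_integral_le_integral_norm _).trans_eq ?_
    simp only [norm_mul, RCLike.norm_conj]

lemma integrable_norm_mul_abs_re {F H : ℝ → ℂ} (hF : Continuous F) (hH : Continuous H)
    (hFH : Integrable fun t => F t * H t) : Integrable fun t => ‖F t‖ * |(H t).re| := by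
  refine hFH.norm.mono (hF.norm.mul (continuous_re.comp hH).abs).aestronglyMeasurable
    (ae_of_all _ fun t => ?_)
  rw [norm_norm, norm_mul, norm_mul, norm_norm, Real.norm_eq_abs, abs_abs]
  gcongr
  exact abs_re_le_norm _

end ContourShift

section DiffKernel

open Complex Set

variable {h x y ε X : ℝ} {s : ℂ}

/-- The difference quotient in `y` of the Riesz kernel: the Mellin kernel of the sum of an
arithmetic function against the weight `trapezoid y h`. -/
noncomputable def diffKernel (y h : ℝ) (s : ℂ) : ℂ :=
  (rieszKernel (y + h) s - rieszKernel y s) / h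

lemma differentiableAt_rieszKernel (hy : 0 < y) (hs : 0 < s.re) :
    DifferentiableAt ℂ (rieszKernel y) s := by
  have hden : s * (s + 1) ≠ 0 :=
    mul_ne_zero (ne_zero_of_re_pos hs) (ne_zero_of_re_pos (by simp; linarith))
  exact (DifferentiableAt.const_cpow (by fun_prop) (.inl (ofReal_ne_zero.mpr hy.ne'))).div
    (by fun_prop) hden

lemma differentiableAt_diffKernel (hy : 0 < y) (hh : 0 < h) (hs : 0 < s.re) :
    DifferentiableAt ℂ (diffKernel y h) s :=
  ((differentiableAt_rieszKernel (by linarith) hs).sub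
    (differentiableAt_rieszKernel hy hs)).div_const _

lemma norm_diffKernel_le_div_mul (hy : 0 < y) (hh : 0 < h) (hX : y + h ≤ X) (hs : 0 < s.re) :
    ‖diffKernel y h s‖ ≤ 2 * X ^ (s.re + 1) / (h * (‖s‖ * ‖s + 1‖)) := by
  have hriesz : ∀ u, 0 < u → u ≤ X → ‖rieszKernel u s‖ ≤ X ^ (s.re + 1) / (‖s‖ * ‖s + 1‖) := by
    intro u hu huX
    rw [norm_rieszKernel hu]
    gcongr
  calc ‖diffKernel y h s‖ = ‖rieszKernel (y + h) s - rieszKernel y s‖ / h := by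
        rw [diffKernel, norm_div, norm_real, Real.norm_of_nonneg hh.le]
    _ ≤ (X ^ (s.re + 1) / (‖s‖ * ‖s + 1‖) + X ^ (s.re + 1) / (‖s‖ * ‖s + 1‖)) / h := by
        gcongr
        exact (norm_sub_le _ _).trans
          (add_le_add (hriesz _ (by linarith) hX) (hriesz _ hy (by linarith)))
    _ = 2 * X ^ (s.re + 1) / (h * (‖s‖ * ‖s + 1‖)) := by
        rw [← two_mul, ← mul_div_assoc, div_div, mul_comm h]

lemma norm_diffKernel_le_div (hy : 0 < y) (hh : 0 < h) (hX : y + h ≤ X) (hs : 0 < s.re) :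
    ‖diffKernel y h s‖ ≤ X ^ s.re / ‖s‖ := by
  have hs1 : s + 1 ≠ 0 := ne_zero_of_re_pos (by simp; linarith)
  have hderiv : ∀ u ∈ Icc y (y + h),
      HasDerivWithinAt (fun u : ℝ => rieszKernel u s) ((u : ℂ) ^ s / s) (Icc y (y + h)) u := by
    intro u hu
    have hdiv := (hasDerivAt_ofReal_cpow_const (hy.trans_le hu.1).ne' hs1).div_const (s * (s + 1))
    refine (hdiv.congr_deriv ?_).hasDerivWithinAt
    have hs0 : s ≠ 0 := ne_zero_of_re_pos hs
    rw [add_sub_cancel_right]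
    field_simp
  have hbound : ∀ u ∈ Icc y (y + h), ‖(u : ℂ) ^ s / s‖ ≤ X ^ s.re / ‖s‖ := fun u hu => by
    have hu0 : 0 < u := hy.trans_le hu.1
    rw [norm_div, norm_cpow_eq_rpow_re_of_pos hu0]
    gcongr
    exact hu.2.trans hX
  have hmean := (convex_Icc y (y + h)).norm_image_sub_le_of_norm_hasDerivWithin_le hderiv hbound
    (left_mem_Icc.mpr (by linarith)) (right_mem_Icc.mpr (by linarith))
  rw [diffKernel, norm_div, norm_real, Real.norm_of_nonneg hh.le, div_le_iff₀ hh]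
  simpa [abs_of_pos hh] using hmean

lemma mul_one_add_sq_le_norm_mul_norm_add_one (hε : 0 < ε) (hε1 : ε ≤ 1) (hs : ε ≤ s.re) :
    ε * (1 + s.im ^ 2) ≤ ‖s‖ * ‖s + 1‖ := by
  refine abs_le_of_sq_le_sq' ?_ (by positivity) |>.2
  have hs0 : ε ^ 2 * (1 + s.im ^ 2) ≤ s.re * s.re + s.im * s.im := by
    have hsq : ε ^ 2 ≤ s.re * s.re := by nlinarith
    have hε2 : 0 ≤ 1 - ε ^ 2 := by nlinarith
    nlinarith [mul_nonneg hε2 (sq_nonneg s.im)]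
  have hs1 : 1 + s.im ^ 2 ≤ (s.re + 1) * (s.re + 1) + s.im * s.im := by nlinarith
  rw [mul_pow, mul_pow, ← normSq_eq_norm_sq, ← normSq_eq_norm_sq, normSq_apply, normSq_apply,
    sq (1 + _), add_re, add_im, one_re, one_im, add_zero, ← mul_assoc]
  exact mul_le_mul hs0 hs1 (by positivity) (by nlinarith [sq_nonneg s.im])

lemma norm_diffKernel_le_mul_inv (hy : 0 < y) (hh : 0 < h) (hX : y + h ≤ X) (hε : 0 < ε)
    (hε1 : ε ≤ 1) (hs : ε ≤ s.re) :
    ‖diffKernel y h s‖ ≤ 2 * X ^ (s.re + 1) / (h * ε) * (1 + s.im ^ 2)⁻¹ := by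
  have hX0 : 0 ≤ X := by linarith
  calc ‖diffKernel y h s‖ ≤ 2 * X ^ (s.re + 1) / (h * (‖s‖ * ‖s + 1‖)) :=
        norm_diffKernel_le_div_mul hy hh hX (by linarith)
    _ ≤ 2 * X ^ (s.re + 1) / (h * (ε * (1 + s.im ^ 2))) := by
        gcongr _ / (h * ?_)
        exact mul_one_add_sq_le_norm_mul_norm_add_one hε hε1 hs
    _ = 2 * X ^ (s.re + 1) / (h * ε) * (1 + s.im ^ 2)⁻¹ := by
        rw [← div_eq_mul_inv, div_div, mul_assoc]

lemma inv_one_add_sq_le_two_mul_rpow (t : ℝ) : (1 + t ^ 2)⁻¹ ≤ 2 * (1 + |t|) ^ (-2 : ℝ) := by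
  rw [Real.rpow_neg (by positivity), Real.rpow_two, ← div_eq_mul_inv, inv_eq_one_div,
    div_le_div_iff₀ (by positivity) (by positivity)]
  nlinarith [sq_nonneg (1 - |t|), sq_abs t]

lemma norm_diffKernel_le_rpow (hy : 0 < y) (hh : 0 < h) (hX : y + h ≤ X) (hX1 : 1 ≤ X)
    (hε : 0 < ε) (hε1 : ε ≤ 1) (hs : ε ≤ s.re) (hs2 : s.re ≤ 2) :
    ‖diffKernel y h s‖ ≤ 4 * X ^ (3 : ℝ) / (h * ε) * (1 + |s.im|) ^ (-2 : ℝ) := by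
  calc ‖diffKernel y h s‖ ≤ 2 * X ^ (s.re + 1) / (h * ε) * (1 + s.im ^ 2)⁻¹ :=
        norm_diffKernel_le_mul_inv hy hh hX hε hε1 hs
    _ ≤ 2 * X ^ (3 : ℝ) / (h * ε) * (2 * (1 + |s.im|) ^ (-2 : ℝ)) := by
        gcongr
        · linarith
        · exact inv_one_add_sq_le_two_mul_rpow s.im
    _ = 4 * X ^ (3 : ℝ) / (h * ε) * (1 + |s.im|) ^ (-2 : ℝ) := by ring

lemma two_le_log (hx : 8 ≤ x) : 2 ≤ Real.log x := by
  have hlog8 : Real.log 8 = 3 * Real.log 2 := by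
    rw [show (8 : ℝ) = 2 ^ 3 by norm_num, Real.log_pow]
    norm_num
  linarith [Real.log_two_gt_d9, Real.log_le_log (by norm_num) hx]

lemma inv_log_pos (hx : 8 ≤ x) : 0 < (Real.log x)⁻¹ :=
  inv_pos.mpr (by linarith [two_le_log hx])

lemma inv_log_le_half (hx : 8 ≤ x) : (Real.log x)⁻¹ ≤ 1 / 2 := by
  rw [one_div]
  exact inv_anti₀ two_pos (two_le_log hx)

lemma rpow_inv_log_le_three (hx : 8 ≤ x) : x ^ (Real.log x)⁻¹ ≤ 3 := by
  rw [Real.rpow_inv_log (by linarith) (by linarith)]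
  linarith [Real.exp_one_lt_d9]

lemma two_mul_rpow_add_inv_log_le (hx : 8 ≤ x) (a : ℝ) :
    (2 * x) ^ (a + (Real.log x)⁻¹) ≤ 6 * (2 * x) ^ a := by
  have hx0 : 0 < x := by linarith
  have htwo : (2 : ℝ) ^ (Real.log x)⁻¹ ≤ 2 := by
    simpa using Real.rpow_le_rpow_of_exponent_le one_le_two
      ((inv_log_le_half hx).trans (by norm_num : (1 / 2 : ℝ) ≤ 1))
  calc (2 * x) ^ (a + (Real.log x)⁻¹)
      = (2 ^ (Real.log x)⁻¹ * x ^ (Real.log x)⁻¹) * (2 * x) ^ a := by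
        rw [Real.rpow_add (by positivity), mul_comm, ← Real.mul_rpow two_pos.le hx0.le]
    _ ≤ (2 * 3) * (2 * x) ^ a := by
        gcongr
        exact rpow_inv_log_le_three hx
    _ = 6 * (2 * x) ^ a := by norm_num

lemma le_mul_rpow_neg_of_le_div {A k τ : ℝ} (hx : 8 ≤ x) (hτ : 1 ≤ τ) (hA : 0 ≤ A)
    (hk : k ≤ A * √x / τ) (hk' : k ≤ A * x / τ ^ 2) :
    k ≤ 3 * A * √x * τ ^ (-(1 + (Real.log x)⁻¹)) := by
  have hτ0 : 0 < τ := by linarith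
  have hε := inv_log_pos hx
  have hε1 := inv_log_le_half hx
  have hτx := rpow_inv_log_le_three hx
  set ε := (Real.log x)⁻¹
  rcases le_or_gt τ x with h | h
  · calc k ≤ A * √x / τ := hk
      _ = A * √x * (τ ^ ε * τ ^ (-(1 + ε))) := by
          rw [← Real.rpow_add hτ0, show ε + -(1 + ε) = -1 by ring, Real.rpow_neg_one]
          rfl
      _ ≤ A * √x * (x ^ ε * τ ^ (-(1 + ε))) := by gcongr
      _ ≤ A * √x * (3 * τ ^ (-(1 + ε))) := by gcongr
      _ = 3 * A * √x * τ ^ (-(1 + ε)) := by ring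
  · have hsqrt : √x ≤ τ ^ (1 - ε) := by
      rw [Real.sqrt_eq_rpow]
      exact (Real.rpow_le_rpow (by linarith) h.le (by norm_num)).trans
        (Real.rpow_le_rpow_of_exponent_le hτ (by linarith))
    calc k ≤ A * x / τ ^ 2 := hk'
      _ = A * (√x * √x) * τ ^ (-2 : ℝ) := by
          rw [Real.mul_self_sqrt (by linarith), Real.rpow_neg hτ0.le, Real.rpow_two]
          rfl
      _ ≤ A * (√x * τ ^ (1 - ε)) * τ ^ (-2 : ℝ) := by gcongr
      _ = A * √x * τ ^ (-(1 + ε)) := by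
          rw [show -(1 + ε) = 1 - ε + -2 by ring, Real.rpow_add hτ0]
          ring
      _ ≤ 3 * A * √x * τ ^ (-(1 + ε)) := by
          gcongr
          linarith

lemma norm_diffKernel_sqrt_le_of_re_eq_half_add (hx : 8 ≤ x) (hy : 0 < y) (hyx : y + √x ≤ 2 * x)
    (hs : s.re = 1 / 2 + (Real.log x)⁻¹) :
    ‖diffKernel y (√x) s‖ ≤ 972 * √x * (1 + |s.im|) ^ (-(1 + (Real.log x)⁻¹)) := by
  have hε := inv_log_pos hx
  have hsqrt : 0 < √x := Real.sqrt_pos.mpr (by linarith)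
  have hs0 : 0 < s.re := by linarith
  have hτ : (1 + |s.im|) / 3 ≤ ‖s‖ := by
    linarith [abs_im_le_norm s, re_le_norm s]
  have hX : (2 * x) ^ s.re ≤ 9 * √x := by
    have h2 : √2 ≤ 3 / 2 := Real.sqrt_two_lt_three_halves.le
    have h := two_mul_rpow_add_inv_log_le hx (1 / 2)
    rw [← hs, ← Real.sqrt_eq_rpow, Real.sqrt_mul zero_le_two] at h
    nlinarith
  have hmul := le_mul_rpow_neg_of_le_div (A := 324) (k := ‖diffKernel y (√x) s‖)
    (τ := 1 + |s.im|) hx (by simp) (by norm_num) ?_ ?_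
  · exact hmul.trans_eq (by norm_num)
  · calc ‖diffKernel y (√x) s‖ ≤ (2 * x) ^ s.re / ‖s‖ := norm_diffKernel_le_div hy hsqrt hyx hs0
      _ ≤ 9 * √x / ((1 + |s.im|) / 3) := by gcongr
      _ = 27 * √x / (1 + |s.im|) := by
          field_simp
          norm_num
      _ ≤ 324 * √x / (1 + |s.im|) := by
          gcongr
          norm_num
  · calc ‖diffKernel y (√x) s‖ ≤ 2 * (2 * x) ^ (s.re + 1) / (√x * (‖s‖ * ‖s + 1‖)) :=
          norm_diffKernel_le_div_mul hy hsqrt hyx hs0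
      _ ≤ 2 * (9 * √x * (2 * x)) / (√x * ((1 + |s.im|) / 3 * ((1 + |s.im|) / 3))) := by
          rw [Real.rpow_add_one (by linarith)]
          gcongr
          exact hτ.trans (norm_le_norm_add_one hs0.le)
      _ = 324 * x / (1 + |s.im|) ^ 2 := by
          field_simp
          norm_num

lemma norm_diffKernel_sqrt_le_of_re_eq_inv_log (hx : 8 ≤ x) (hy : 0 < y) (hyx : y + √x ≤ 2 * x)
    (hs : s.re = (Real.log x)⁻¹) :
    ‖diffKernel y (√x) s‖ ≤ 24 * √x * Real.log x * (1 + s.im ^ 2)⁻¹ := by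
  have hε := inv_log_pos hx
  have hlog := two_le_log hx
  have hsqrt : 0 < √x := Real.sqrt_pos.mpr (by linarith)
  have hX : (2 * x) ^ (s.re + 1) ≤ 12 * (√x * √x) := by
    rw [hs, add_comm, Real.mul_self_sqrt (by linarith)]
    exact (two_mul_rpow_add_inv_log_le hx 1).trans_eq (by rw [Real.rpow_one]; ring)
  calc ‖diffKernel y (√x) s‖
      ≤ 2 * (2 * x) ^ (s.re + 1) / (√x * (Real.log x)⁻¹) * (1 + s.im ^ 2)⁻¹ :=
        norm_diffKernel_le_mul_inv hy hsqrt hyx hε (by linarith [inv_log_le_half hx]) hs.ge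
    _ ≤ 2 * (12 * (√x * √x)) / (√x * (Real.log x)⁻¹) * (1 + s.im ^ 2)⁻¹ := by gcongr
    _ = 24 * √x * Real.log x * (1 + s.im ^ 2)⁻¹ := by
        field_simp
        norm_num

end DiffKernel

section WindowIntegral

open MeasureTheory Set

lemma sum_range_rpow_neg_le {δ : ℝ} (hδ : 0 < δ) (N : ℕ) :
    ∑ k ∈ Finset.range N, ((k : ℝ) + 1) ^ (-(1 + δ)) ≤ 1 + 1 / δ := by
  cases N with
  | zero =>
    rw [Finset.sum_range_zero]
    positivity
  | succ N =>
    have hanti : AntitoneOn (fun u : ℝ => u ^ (-(1 + δ))) (Icc 1 (1 + N)) := fun u hu v _ huv =>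
      Real.rpow_le_rpow_of_nonpos (by linarith [hu.1]) huv (by linarith)
    have hint : ∫ u in (1 : ℝ)..(1 + N), u ^ (-(1 + δ)) ≤ 1 / δ := by
      rw [integral_rpow (.inr ⟨by linarith, by
          rw [uIcc_of_le (by simp)]; exact fun h => absurd h.1 (by norm_num)⟩),
        Real.one_rpow, show -(1 + δ) + 1 = -δ by ring, div_neg, ← neg_div, neg_sub]
      gcongr
      exact sub_le_self _ (by positivity)
    calc ∑ k ∈ Finset.range (N + 1), ((k : ℝ) + 1) ^ (-(1 + δ))
        = ∑ k ∈ Finset.range N, (1 + ((k + 1 : ℕ) : ℝ)) ^ (-(1 + δ)) + 1 := by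
          simp [Finset.sum_range_succ', add_comm]
      _ ≤ 1 / δ + 1 := by
          gcongr
          exact hanti.sum_le_integral.trans hint
      _ = 1 + 1 / δ := add_comm _ _

lemma log_mul_add_six_le {Q δ : ℝ} (hQ : 1 ≤ Q) (hδ : 0 < δ) (k : ℕ) :
    Real.log (Q * (k + 6)) ≤ Real.log (6 * Q) + 1 / δ * ((k : ℝ) + 1) ^ δ := by
  have : (0 : ℝ) ≤ k := k.cast_nonneg
  calc Real.log (Q * (k + 6)) ≤ Real.log (6 * Q * (k + 1)) :=
        Real.log_le_log (by positivity) (by nlinarith)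
    _ = Real.log (6 * Q) + Real.log (k + 1) := Real.log_mul (by positivity) (by positivity)
    _ ≤ Real.log (6 * Q) + 1 / δ * ((k : ℝ) + 1) ^ δ := by
        gcongr
        rw [one_div_mul_eq_div]
        exact Real.log_le_rpow_div (by positivity) hδ

lemma sum_range_rpow_neg_mul_log_le {Q ε : ℝ} (hQ : 1 ≤ Q) (hε : 0 < ε) (hε1 : ε ≤ 1 / 2)
    (N : ℕ) :
    ∑ k ∈ Finset.range N, ((k : ℝ) + 1) ^ (-(1 + ε)) * Real.log (Q * (k + 6))
      ≤ 6 * ε⁻¹ * (Real.log (6 * Q) + ε⁻¹) := by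
  have hlog : 0 ≤ Real.log (6 * Q) := Real.log_nonneg (by linarith)
  have hinv : 2 ≤ ε⁻¹ := by
    rw [le_inv_comm₀ two_pos hε]
    linarith
  have hterm (k : ℕ) : ((k : ℝ) + 1) ^ (-(1 + ε)) * Real.log (Q * (k + 6))
      ≤ Real.log (6 * Q) * ((k : ℝ) + 1) ^ (-(1 + ε))
        + 2 * ε⁻¹ * ((k : ℝ) + 1) ^ (-(1 + ε / 2)) := by
    have hk : (0 : ℝ) < k + 1 := by positivity
    calc ((k : ℝ) + 1) ^ (-(1 + ε)) * Real.log (Q * (k + 6))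
        ≤ ((k : ℝ) + 1) ^ (-(1 + ε))
            * (Real.log (6 * Q) + 1 / (ε / 2) * ((k : ℝ) + 1) ^ (ε / 2)) := by
          gcongr
          exact log_mul_add_six_le hQ (half_pos hε) k
      _ = Real.log (6 * Q) * ((k : ℝ) + 1) ^ (-(1 + ε))
            + 2 * ε⁻¹ * (((k : ℝ) + 1) ^ (-(1 + ε)) * ((k : ℝ) + 1) ^ (ε / 2)) := by
          field_simp
      _ = Real.log (6 * Q) * ((k : ℝ) + 1) ^ (-(1 + ε))
            + 2 * ε⁻¹ * ((k : ℝ) + 1) ^ (-(1 + ε / 2)) := by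
          rw [← Real.rpow_add hk, show -(1 + ε) + ε / 2 = -(1 + ε / 2) by ring]
  calc ∑ k ∈ Finset.range N, ((k : ℝ) + 1) ^ (-(1 + ε)) * Real.log (Q * (k + 6))
      ≤ Real.log (6 * Q) * ∑ k ∈ Finset.range N, ((k : ℝ) + 1) ^ (-(1 + ε))
          + 2 * ε⁻¹ * ∑ k ∈ Finset.range N, ((k : ℝ) + 1) ^ (-(1 + ε / 2)) := by
        rw [Finset.mul_sum, Finset.mul_sum, ← Finset.sum_add_distrib]
        exact Finset.sum_le_sum fun k _ => hterm k
    _ ≤ Real.log (6 * Q) * (1 + 1 / ε) + 2 * ε⁻¹ * (1 + 1 / (ε / 2)) := by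
        gcongr
        · exact sum_range_rpow_neg_le hε N
        · exact sum_range_rpow_neg_le (half_pos hε) N
    _ = Real.log (6 * Q) * (1 + ε⁻¹) + 2 * ε⁻¹ * (1 + 2 * ε⁻¹) := by field_simp
    _ ≤ 6 * ε⁻¹ * (Real.log (6 * Q) + ε⁻¹) := by nlinarith

lemma setIntegral_Ioi_le_of_sum_le {F : ℝ → ℝ} (hF : Integrable F) {b : ℕ → ℝ} {S : ℝ}
    (hb : ∀ k : ℕ, ∫ t in (k : ℝ)..(k + 1), F t ≤ b k)
    (hS : ∀ N, ∑ k ∈ Finset.range N, b k ≤ S) : ∫ t in Ioi 0, F t ≤ S := by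
  refine le_of_tendsto' (intervalIntegral_tendsto_integral_Ioi (0 : ℝ) hF.integrableOn
    tendsto_natCast_atTop_atTop) fun N => ?_
  calc ∫ t in (0 : ℝ)..N, F t = ∑ k ∈ Finset.range N, ∫ t in (k : ℝ)..(k + 1), F t := by
        simpa using (intervalIntegral.sum_integral_adjacent_intervals (f := F) (μ := volume)
          (a := fun k : ℕ => (k : ℝ)) (n := N) fun _ _ => hF.intervalIntegrable).symm
    _ ≤ ∑ k ∈ Finset.range N, b k := Finset.sum_le_sum fun k _ => hb k
    _ ≤ S := hS N

variable {w g : ℝ → ℝ} {A B Q ε : ℝ}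

lemma setIntegral_Ioi_mul_le_of_window (hA : 0 ≤ A) (hB : 0 ≤ B) (hQ : 1 ≤ Q) (hε : 0 < ε)
    (hε1 : ε ≤ 1 / 2) (hgc : Continuous g) (hg0 : ∀ t, 0 ≤ g t)
    (hw : ∀ t, w t ≤ A * (1 + |t|) ^ (-(1 + ε)))
    (hg : ∀ k : ℕ, ∫ t in (k : ℝ)..(k + 1), g t ≤ B * Real.log (Q * (k + 6)))
    (hi : Integrable fun t => w t * g t) :
    ∫ t in Ioi 0, w t * g t ≤ 6 * A * B * ε⁻¹ * (Real.log (6 * Q) + ε⁻¹) := by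
  have hunit (k : ℕ) : ∫ t in (k : ℝ)..(k + 1), w t * g t
      ≤ A * B * (((k : ℝ) + 1) ^ (-(1 + ε)) * Real.log (Q * (k + 6))) := by
    calc ∫ t in (k : ℝ)..(k + 1), w t * g t
        ≤ ∫ t in (k : ℝ)..(k + 1), A * ((k : ℝ) + 1) ^ (-(1 + ε)) * g t := by
          refine intervalIntegral.integral_mono_on (by linarith) hi.intervalIntegrable
            ((continuous_const.mul hgc).intervalIntegrable _ _) fun t ht => ?_
          refine mul_le_mul_of_nonneg_right ((hw t).trans ?_) (hg0 t)
          refine mul_le_mul_of_nonneg_left ?_ hA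
          exact Real.rpow_le_rpow_of_nonpos (by positivity) (by linarith [ht.1, le_abs_self t])
            (by linarith)
      _ = A * ((k : ℝ) + 1) ^ (-(1 + ε)) * ∫ t in (k : ℝ)..(k + 1), g t :=
          intervalIntegral.integral_const_mul _ _
      _ ≤ A * ((k : ℝ) + 1) ^ (-(1 + ε)) * (B * Real.log (Q * (k + 6))) := by
          gcongr
          exact hg k
      _ = A * B * (((k : ℝ) + 1) ^ (-(1 + ε)) * Real.log (Q * (k + 6))) := by ring
  refine setIntegral_Ioi_le_of_sum_le hi hunit fun N => ?_
  rw [← Finset.mul_sum]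
  calc A * B * ∑ k ∈ Finset.range N, ((k : ℝ) + 1) ^ (-(1 + ε)) * Real.log (Q * (k + 6))
      ≤ A * B * (6 * ε⁻¹ * (Real.log (6 * Q) + ε⁻¹)) := by
        gcongr
        exact sum_range_rpow_neg_mul_log_le hQ hε hε1 N
    _ = 6 * A * B * ε⁻¹ * (Real.log (6 * Q) + ε⁻¹) := by ring

lemma integral_mul_le_of_window (hA : 0 ≤ A) (hB : 0 ≤ B) (hQ : 1 ≤ Q) (hε : 0 < ε)
    (hε1 : ε ≤ 1 / 2) (hgc : Continuous g) (hg0 : ∀ t, 0 ≤ g t)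
    (hw : ∀ t, w t ≤ A * (1 + |t|) ^ (-(1 + ε)))
    (hg : ∀ t₀ : ℝ, ∫ t in (t₀ - 1 / 2)..(t₀ + 1 / 2), g t ≤ B * Real.log (Q * (|t₀| + 5)))
    (hi : Integrable fun t => w t * g t) :
    ∫ t, w t * g t ≤ 12 * A * B * ε⁻¹ * (Real.log (6 * Q) + ε⁻¹) := by
  have hlog (k : ℕ) : B * Real.log (Q * (|(k : ℝ) + 1 / 2| + 5)) ≤ B * Real.log (Q * (k + 6)) := by
    rw [abs_of_pos (by positivity)]
    gcongr B * Real.log (Q * ?_)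
    linarith
  have hright : ∫ t in Ioi 0, w t * g t ≤ 6 * A * B * ε⁻¹ * (Real.log (6 * Q) + ε⁻¹) := by
    refine setIntegral_Ioi_mul_le_of_window hA hB hQ hε hε1 hgc hg0 hw (fun k => ?_) hi
    refine le_trans (le_of_eq ?_) ((hg (k + 1 / 2)).trans (hlog k))
    congr 1 <;> ring
  have hleft : ∫ t in Ioi 0, w (-t) * g (-t) ≤ 6 * A * B * ε⁻¹ * (Real.log (6 * Q) + ε⁻¹) := by
    refine setIntegral_Ioi_mul_le_of_window (w := fun t => w (-t)) (g := fun t => g (-t)) hA hB hQ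
      hε hε1 (by fun_prop) (fun t => hg0 _) (fun t => by simpa using hw (-t))
      (fun k => ?_) hi.comp_neg
    have hk := hg (-(k + 1 / 2))
    rw [abs_neg] at hk
    rw [intervalIntegral.integral_comp_neg]
    refine le_trans (le_of_eq ?_) (hk.trans (hlog k))
    congr 1 <;> ring
  calc ∫ t, w t * g t = (∫ t in Ioi 0, w t * g t) + ∫ t in Ioi 0, w (-t) * g (-t) := by
        rw [integral_comp_neg_Ioi (0 : ℝ) fun t => w t * g t, neg_zero, ← compl_Ioi,
          integral_add_compl measurableSet_Ioi hi]
    _ ≤ 12 * A * B * ε⁻¹ * (Real.log (6 * Q) + ε⁻¹) := by linarith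

end WindowIntegral

section CharacterSum

open Complex MeasureTheory
open scoped ArithmeticFunction.vonMangoldt

variable {q : ℕ} [NeZero q] {c h x y : ℝ}

lemma integrable_rieszKernel_mul_logDeriv (χ : DirichletCharacter ℂ q) (hc : 1 < c) (hy : 0 < y) :
    Integrable fun t : ℝ =>
      rieszKernel y (c + t * I) * logDeriv (entireLFunction χ) (c + t * I) := by
  have hcont : Continuous fun t : ℝ => logDeriv (entireLFunction χ) (c + t * I) :=
    continuous_vertical_of_differentiableAt fun s hs =>
      ((differentiable_entireLFunction χ).deriv s).div (differentiable_entireLFunction χ s)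
        (entireLFunction_ne_zero_of_one_le_re χ (by linarith))
  refine (integrable_rieszKernel (by linarith) hy).mul_bdd
    (c := c * ((Real.log 4 + 5) / (c - 1))) hcont.aestronglyMeasurable (ae_of_all _ fun t => ?_)
  simpa using norm_logDeriv_entireLFunction_le_of_one_lt_re χ (s := c + t * I) (by simpa using hc)

lemma integral_rieszKernel_mul_LSeries_twist_vonMangoldt (χ : DirichletCharacter ℂ q)
    (hc : 1 < c) (hy : 1 ≤ y) :
    ∫ t : ℝ, rieszKernel y (c + t * I) *
        LSeries ((fun n : ℕ => χ n) * fun n : ℕ => (Λ n : ℂ)) (c + t * I)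
      = -(∫ t : ℝ, rieszKernel y (c + t * I) * logDeriv (entireLFunction χ) (c + t * I))
        + poleOrder χ * (2 * Real.pi * ((y - 1) ^ 2 / 2)) := by
  have hpole : Integrable fun t : ℝ => rieszKernel y (c + t * I) / ((c + t * I : ℂ) - 1) := by
    simpa only [mul_one_div] using integrable_mul_one_div_vertical_sub_one
      (integrable_rieszKernel (c := c) (by linarith) (by linarith : 0 < y)) hc
  have hlogDeriv := (integrable_rieszKernel_mul_logDeriv χ hc (by linarith : 0 < y)).fun_neg
  rw [← integral_rieszKernel_div_sub_one hc hy, ← integral_neg, ← integral_const_mul,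
    ← integral_add hlogDeriv (hpole.const_mul _)]
  refine integral_congr_ae (ae_of_all _ fun t => ?_)
  have hL := neg_logDeriv_entireLFunction χ (s := c + t * I) (by simpa using hc)
  simp only [eq_add_of_sub_eq hL.symm]
  ring

lemma hasSum_twist_vonMangoldt_max_sub (χ : DirichletCharacter ℂ q) (hc : 1 < c) (hy : 1 ≤ y) :
    HasSum (fun n : ℕ => (χ n * (Λ n * max (y - n) 0 : ℝ) : ℂ))
      (-((2 * Real.pi : ℂ)⁻¹ *
          ∫ t : ℝ, rieszKernel y (c + t * I) * logDeriv (entireLFunction χ) (c + t * I))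
        + poleOrder χ * ((y - 1) ^ 2 / 2)) := by
  have hsum := (hasSum_mul_max_sub_of_LSeriesSummable (by simp) (by linarith) (by linarith)
    (DirichletCharacter.LSeriesSummable_twist_vonMangoldt χ (s := c) (by simpa using hc))).mul_left
    (2 * Real.pi : ℂ)⁻¹
  have hvalue (J : ℂ) : (2 * Real.pi : ℂ)⁻¹ *
      (-J + poleOrder χ * (2 * Real.pi * ((y - 1) ^ 2 / 2)))
        = -((2 * Real.pi : ℂ)⁻¹ * J) + poleOrder χ * ((y - 1) ^ 2 / 2) := by
    field_simp
  rw [integral_rieszKernel_mul_LSeries_twist_vonMangoldt χ hc hy, hvalue] at hsum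
  refine hsum.congr_fun fun n => ?_
  rw [inv_mul_cancel_left₀ (by simp), Pi.mul_apply, ofReal_mul, mul_assoc]

/-- The piecewise linear weight equal to `1` on `u ≤ y` and to `0` on `y + h ≤ u`: a smooth
substitute for the indicator function of `u ≤ y`. -/
noncomputable def trapezoid (y h u : ℝ) : ℝ := (max (y + h - u) 0 - max (y - u) 0) / h

lemma integral_diffKernel_mul_logDeriv_eq (χ : DirichletCharacter ℂ q) (hc : 1 < c) (hy : 0 < y)
    (hh : 0 < h) :
    ∫ t : ℝ, diffKernel y h (c + t * I) * logDeriv (entireLFunction χ) (c + t * I)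
      = ((∫ t : ℝ, rieszKernel (y + h) (c + t * I) * logDeriv (entireLFunction χ) (c + t * I))
        - ∫ t : ℝ, rieszKernel y (c + t * I) * logDeriv (entireLFunction χ) (c + t * I)) / h := by
  rw [← integral_sub (integrable_rieszKernel_mul_logDeriv χ hc (by linarith))
    (integrable_rieszKernel_mul_logDeriv χ hc hy), ← integral_div]
  refine integral_congr_ae (ae_of_all _ fun t => ?_)
  simp only [diffKernel]
  ring

lemma hasSum_twist_vonMangoldt_trapezoid (χ : DirichletCharacter ℂ q) (hc : 1 < c) (hy : 1 ≤ y)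
    (hh : 0 < h) :
    HasSum (fun n : ℕ => (χ n * (Λ n * trapezoid y h n : ℝ) : ℂ))
      (-((2 * Real.pi : ℂ)⁻¹ *
          ∫ t : ℝ, diffKernel y h (c + t * I) * logDeriv (entireLFunction χ) (c + t * I))
        + poleOrder χ * (y - 1 + h / 2 : ℝ)) := by
  have hh0 : (h : ℂ) ≠ 0 := ofReal_ne_zero.mpr hh.ne'
  have hsum := ((hasSum_twist_vonMangoldt_max_sub χ hc (by linarith : 1 ≤ y + h)).sub
    (hasSum_twist_vonMangoldt_max_sub χ hc hy)).div_const (h : ℂ)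
  have hvalue (p J₁ J₀ : ℂ) :
      (-((2 * Real.pi : ℂ)⁻¹ * J₁) + p * (((y + h : ℝ) - 1) ^ 2 / 2)
          - (-((2 * Real.pi : ℂ)⁻¹ * J₀) + p * ((y - 1) ^ 2 / 2))) / h
        = -((2 * Real.pi : ℂ)⁻¹ * ((J₁ - J₀) / h)) + p * (y - 1 + h / 2 : ℝ) := by
    push_cast
    field_simp
    ring
  rw [hvalue, ← integral_diffKernel_mul_logDeriv_eq χ hc (by linarith) hh] at hsum
  refine hsum.congr_fun fun n => ?_
  simp only [trapezoid]
  push_cast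
  ring

lemma norm_logDeriv_entireLFunction_le_of_re_eq_one_add_inv_log (χ : DirichletCharacter ℂ q)
    (hx : 8 ≤ x) {s : ℂ} (hs : s.re = 1 + (Real.log x)⁻¹) :
    ‖logDeriv (entireLFunction χ) s‖ ≤ 12 * Real.log x := by
  have hlog := two_le_log hx
  have hlog4 : Real.log 4 ≤ 3 := by linarith [Real.log_le_sub_one_of_pos (x := 4) (by norm_num)]
  calc ‖logDeriv (entireLFunction χ) s‖ ≤ s.re * ((Real.log 4 + 5) / (s.re - 1)) :=
        norm_logDeriv_entireLFunction_le_of_one_lt_re χ (by linarith [inv_log_pos hx])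
    _ = (1 + (Real.log x)⁻¹) * (Real.log 4 + 5) * Real.log x := by
        rw [hs, add_sub_cancel_left, div_inv_eq_mul, mul_assoc]
    _ ≤ (1 + 1 / 2) * (3 + 5) * Real.log x := by
        gcongr
        exact inv_log_le_half hx
    _ = 12 * Real.log x := by norm_num

lemma integral_norm_diffKernel_mul_norm_logDeriv_le (χ : DirichletCharacter ℂ q) (hx : 8 ≤ x)
    (hy : 0 < y) (hyx : y + √x ≤ 2 * x) :
    ∫ t : ℝ, ‖diffKernel y (√x) (((Real.log x)⁻¹ : ℝ) + t * I)‖ *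
        ‖logDeriv (entireLFunction χ) ((1 + (Real.log x)⁻¹ : ℝ) + t * I)‖
      ≤ 1000 * √x * Real.log x ^ 2 := by
  have hlog := two_le_log hx
  have hbound (t : ℝ) : ‖diffKernel y (√x) (((Real.log x)⁻¹ : ℝ) + t * I)‖ *
        ‖logDeriv (entireLFunction χ) ((1 + (Real.log x)⁻¹ : ℝ) + t * I)‖
      ≤ 288 * √x * Real.log x ^ 2 * (1 + t ^ 2)⁻¹ := by
    calc _ ≤ 24 * √x * Real.log x * (1 + t ^ 2)⁻¹ * (12 * Real.log x) := by
          gcongr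
          · simpa using norm_diffKernel_sqrt_le_of_re_eq_inv_log hx hy hyx
              (s := ((Real.log x)⁻¹ : ℝ) + t * I) (by simp)
          · exact norm_logDeriv_entireLFunction_le_of_re_eq_one_add_inv_log χ hx (by simp)
      _ = 288 * √x * Real.log x ^ 2 * (1 + t ^ 2)⁻¹ := by ring
  calc _ ≤ ∫ t : ℝ, 288 * √x * Real.log x ^ 2 * (1 + t ^ 2)⁻¹ :=
        integral_mono_of_nonneg (ae_of_all _ fun t => by positivity)
          (integrable_inv_one_add_sq.const_mul _) (ae_of_all _ hbound)
    _ = 288 * √x * Real.log x ^ 2 * Real.pi := by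
        rw [integral_const_mul, integral_univ_inv_one_add_sq]
    _ ≤ 288 * √x * Real.log x ^ 2 * 3.15 := by
        gcongr
        exact Real.pi_lt_d2.le
    _ ≤ 1000 * √x * Real.log x ^ 2 := by nlinarith [show 0 ≤ √x * Real.log x ^ 2 by positivity]

lemma RiemannHypothesisFor.integrable_diffKernel_mul_logDeriv {χ : DirichletCharacter ℂ q}
    (hχ : RiemannHypothesisFor χ) {σ : ℝ} (hσ : 1 / 2 < σ) (hσ1 : σ ≤ 1) (hy : 0 < y)
    (hh : 0 < h) :
    Integrable fun t : ℝ =>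
      diffKernel y h (σ + t * I) * logDeriv (entireLFunction χ) (σ + t * I) := by
  obtain ⟨M, -, hM⟩ := hχ.exists_norm_logDeriv_le (sub_pos.mpr hσ)
  have hσ0 : 0 < σ := by linarith
  exact integrable_vertical_of_norm_le
    (Φ := fun s => diffKernel y h s * logDeriv (entireLFunction χ) s)
    (by norm_num : (1 : ℝ) < 2 - 1 / 2)
    (fun s hs => (differentiableAt_diffKernel hy hh (hs ▸ hσ0)).mul
      (hχ.differentiableAt_logDeriv (hs ▸ hσ)))
    (fun s hs => norm_mul_le_mul_rpow (norm_diffKernel_le_rpow hy hh (le_max_left (y + h) 1)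
      (le_max_right _ _) hσ0 hσ1 hs.ge (by linarith)) (hM s (by linarith) (by linarith)))

lemma exists_integral_norm_diffKernel_mul_abs_re_logDeriv_le : ∃ C > 0, ∀ {q : ℕ} [NeZero q]
    {χ : DirichletCharacter ℂ q}, RiemannHypothesisFor χ → ∀ {x y : ℝ}, 8 ≤ x → 0 < y →
      y + √x ≤ 2 * x →
        ∫ t : ℝ, ‖diffKernel y (√x) ((1 / 2 + (Real.log x)⁻¹ : ℝ) + t * I)‖ *
            |(logDeriv (entireLFunction χ) ((1 / 2 + (Real.log x)⁻¹ : ℝ) + t * I)).re|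
          ≤ C * (√x * Real.log x * (Real.log (6 * q) + Real.log x)) := by
  obtain ⟨B, hB0, hB⟩ := exists_integral_abs_re_logDeriv_entireLFunction_le
  refine ⟨12 * 972 * B, by positivity, fun {q _ χ} hχ {x y} hx hy hyx => ?_⟩
  have hε := inv_log_pos hx
  have hε1 := inv_log_le_half hx
  have hsqrt : 0 < √x := Real.sqrt_pos.mpr (by linarith)
  have hKc : Continuous fun t : ℝ =>
      diffKernel y (√x) ((1 / 2 + (Real.log x)⁻¹ : ℝ) + t * I) :=
    continuous_vertical_of_differentiableAt fun s hs =>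
      differentiableAt_diffKernel hy hsqrt (by linarith)
  have hGc := hχ.continuous_logDeriv_vertical (σ := 1 / 2 + (Real.log x)⁻¹) (by linarith)
  have hKG := hχ.integrable_diffKernel_mul_logDeriv (σ := 1 / 2 + (Real.log x)⁻¹) (by linarith)
    (by linarith) hy hsqrt
  have hKb (t : ℝ) : ‖diffKernel y (√x) ((1 / 2 + (Real.log x)⁻¹ : ℝ) + t * I)‖
      ≤ 972 * √x * (1 + |t|) ^ (-(1 + (Real.log x)⁻¹)) := by
    have hK := norm_diffKernel_sqrt_le_of_re_eq_half_add hx hy hyx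
      (s := (1 / 2 + (Real.log x)⁻¹ : ℝ) + t * I) (by simp)
    have him : (((1 / 2 + (Real.log x)⁻¹ : ℝ) : ℂ) + t * I).im = t := by simp
    rwa [him] at hK
  calc _ ≤ 12 * (972 * √x) * B * (Real.log x)⁻¹⁻¹ * (Real.log (6 * q) + (Real.log x)⁻¹⁻¹) :=
        integral_mul_le_of_window (by positivity) hB0.le (one_le_natCast_of_neZero q) hε hε1
          (continuous_re.comp hGc).abs (fun t => abs_nonneg _) hKb
          (hB hχ (by linarith) (by linarith)) (integrable_norm_mul_abs_re hKc hGc hKG)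
    _ = 12 * 972 * B * (√x * Real.log x * (Real.log (6 * q) + Real.log x)) := by
        rw [inv_inv]
        ring

lemma RiemannHypothesisFor.norm_integral_diffKernel_mul_logDeriv_le {χ : DirichletCharacter ℂ q}
    (hχ : RiemannHypothesisFor χ) {ε : ℝ} (hy : 0 < y) (hh : 0 < h) (hε : 0 < ε) (hε1 : ε ≤ 1) :
    ‖∫ t : ℝ, diffKernel y h ((1 + ε : ℝ) + t * I) *
        logDeriv (entireLFunction χ) ((1 + ε : ℝ) + t * I)‖
      ≤ 2 * (∫ t : ℝ, ‖diffKernel y h ((1 / 2 + ε : ℝ) + t * I)‖ *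
            |(logDeriv (entireLFunction χ) ((1 / 2 + ε : ℝ) + t * I)).re|)
        + ∫ t : ℝ, ‖diffKernel y h (ε + t * I)‖ *
            ‖logDeriv (entireLFunction χ) ((1 + ε : ℝ) + t * I)‖ := by
  obtain ⟨M, -, hM⟩ := hχ.exists_norm_logDeriv_le hε
  have hreflect : 2 * (1 / 2 + ε) - (1 + ε) = ε := by ring
  have hshift := norm_integral_mul_le_integral_abs_re_add (σ := 1 / 2 + ε) (c := 1 + ε)
    (K := diffKernel y h) (by linarith) (by norm_num : (1 : ℝ) < 2 - 1 / 2)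
    (fun s hs _ => differentiableAt_diffKernel hy hh (by linarith))
    (fun s hs _ => hχ.differentiableAt_logDeriv (by linarith))
    (fun s hs hs' => norm_diffKernel_le_rpow hy hh (le_max_left (y + h) 1)
      (le_max_right _ _) hε hε1 (by linarith) (by linarith))
    (fun s hs hs' => hM s hs (by linarith))
  rwa [hreflect] at hshift

lemma exists_norm_integral_diffKernel_mul_logDeriv_le : ∃ C > 0, ∀ {q : ℕ} [NeZero q]
    {χ : DirichletCharacter ℂ q}, RiemannHypothesisFor χ → ∀ {x y : ℝ}, 8 ≤ x → 0 < y →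
      y + √x ≤ 2 * x →
        ‖∫ t : ℝ, diffKernel y (√x) ((1 + (Real.log x)⁻¹ : ℝ) + t * I) *
            logDeriv (entireLFunction χ) ((1 + (Real.log x)⁻¹ : ℝ) + t * I)‖
          ≤ C * (√x * Real.log x * (Real.log (6 * q) + Real.log x)) := by
  obtain ⟨C, hC0, hC⟩ := exists_integral_norm_diffKernel_mul_abs_re_logDeriv_le
  refine ⟨2 * C + 1000, by positivity, fun {q _ χ} hχ {x y} hx hy hyx => ?_⟩
  have hlog := two_le_log hx
  have hlogq : 0 ≤ Real.log (6 * q) := Real.log_nonneg (by linarith [one_le_natCast_of_neZero q])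
  calc _ ≤ 2 * _ + _ := hχ.norm_integral_diffKernel_mul_logDeriv_le hy
        (Real.sqrt_pos.mpr (by linarith)) (inv_log_pos hx) (by linarith [inv_log_le_half hx])
    _ ≤ 2 * (C * (√x * Real.log x * (Real.log (6 * q) + Real.log x)))
          + 1000 * √x * Real.log x ^ 2 := by
        gcongr
        · exact hC hχ hx hy hyx
        · exact integral_norm_diffKernel_mul_norm_logDeriv_le χ hx hy hyx
    _ ≤ (2 * C + 1000) * (√x * Real.log x * (Real.log (6 * q) + Real.log x)) := by
        nlinarith [show 0 ≤ √x * Real.log x * Real.log (6 * q) by positivity]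

lemma exists_norm_sum_twist_trapezoid_sub_le : ∃ C > 0, ∀ {q : ℕ} [NeZero q]
    (χ : DirichletCharacter ℂ q), RiemannHypothesisFor χ → ∀ {x y : ℝ}, 8 ≤ x → 1 ≤ y →
      y + √x ≤ 2 * x →
        ∃ S, HasSum (fun n : ℕ => (χ n * (Λ n * trapezoid y (√x) n : ℝ) : ℂ)) S ∧
          ‖S - poleOrder χ * (y - 1 + √x / 2 : ℝ)‖
            ≤ C * (√x * Real.log x * (Real.log (6 * q) + Real.log x)) := by
  obtain ⟨C, hC0, hC⟩ := exists_norm_integral_diffKernel_mul_logDeriv_le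
  refine ⟨C, hC0, fun {q _} χ hχ {x y} hx hy hyx => ⟨_, hasSum_twist_vonMangoldt_trapezoid χ
    (lt_add_of_pos_right 1 (inv_log_pos hx)) hy (Real.sqrt_pos.mpr (by linarith)), ?_⟩⟩
  have hpi : ‖(2 * Real.pi : ℂ)⁻¹‖ ≤ 1 := by
    rw [norm_inv, norm_mul, norm_real, Real.norm_of_nonneg Real.pi_pos.le, Complex.norm_ofNat]
    exact inv_le_one_of_one_le₀ (by linarith [Real.pi_gt_three])
  rw [add_sub_cancel_right, norm_neg, norm_mul]
  exact (mul_le_of_le_one_left (norm_nonneg _) hpi).trans (hC hχ hx (by linarith) hyx)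

end CharacterSum

section Progression

open Complex
open scoped ArithmeticFunction.vonMangoldt
open ArithmeticFunction.vonMangoldt (residueClass residueClass_apply residueClass_nonneg
  residueClass_le)

section Trapezoid

variable {h u y : ℝ}

lemma trapezoid_of_le (hh : 0 < h) (hu : u ≤ y) : trapezoid y h u = 1 := by
  rw [trapezoid, max_eq_left (by linarith), max_eq_left (by linarith), sub_sub_sub_cancel_right,
    add_sub_cancel_left, div_self hh.ne']

lemma trapezoid_of_ge (hh : 0 < h) (hu : y + h ≤ u) : trapezoid y h u = 0 := by
  rw [trapezoid, max_eq_right (by linarith), max_eq_right (by linarith), sub_zero, zero_div]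

lemma trapezoid_nonneg (hh : 0 < h) : 0 ≤ trapezoid y h u :=
  div_nonneg (sub_nonneg.mpr (max_le_max (by linarith) le_rfl)) hh.le

lemma trapezoid_le_one (hh : 0 < h) : trapezoid y h u ≤ 1 := by
  rw [trapezoid, div_le_one hh, sub_le_iff_le_add]
  exact max_le (by linarith [le_max_left (y - u) 0]) (by positivity)

end Trapezoid

variable {q : ℕ} {a : ZMod q}

/-- The Chebyshev function `ψ(t; q, a)` of a residue class: the sum of `Λ n` over `n ≤ t` with
`n ≡ a (mod q)`. -/
noncomputable def psiMod (a : ZMod q) (t : ℝ) : ℝ := ∑ n ∈ Finset.Icc 0 ⌊t⌋₊, residueClass a n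

lemma psiMod_nonneg (a : ZMod q) (t : ℝ) : 0 ≤ psiMod a t :=
  Finset.sum_nonneg fun n _ => residueClass_nonneg a n

lemma psiMod_le_psi (a : ZMod q) (t : ℝ) : psiMod a t ≤ Chebyshev.psi t := by
  rw [Chebyshev.psi_eq_sum_Icc]
  exact Finset.sum_le_sum fun n _ => residueClass_le a n

lemma div_natCast_le_self {t : ℝ} (ht : 0 ≤ t) (m : ℕ) : t / m ≤ t := by
  rcases m.eq_zero_or_pos with rfl | hm
  · simpa using ht
  · exact div_le_self ht (by exact_mod_cast hm)

lemma abs_psiMod_sub_div_totient_le (a : ZMod q) {t : ℝ} (ht : 0 ≤ t) :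
    |psiMod a t - t / q.totient| ≤ 8 * t := by
  have hpsi : psiMod a t ≤ (Real.log 4 + 4) * t :=
    (psiMod_le_psi a t).trans (Chebyshev.psi_le_const_mul_self ht)
  have hlog4 : Real.log 4 ≤ 3 := by linarith [Real.log_le_sub_one_of_pos (x := 4) (by norm_num)]
  have hdiv := div_natCast_le_self ht q.totient
  have hdiv0 : 0 ≤ t / q.totient := by positivity
  exact abs_le.mpr ⟨by linarith [psiMod_nonneg a t], by nlinarith⟩

lemma psiMod_le_of_hasSum {y h W : ℝ} (hy : 0 ≤ y) (hh : 0 < h)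
    (hW : HasSum (fun n : ℕ => residueClass a n * trapezoid y h n) W) : psiMod a y ≤ W := by
  calc psiMod a y = ∑ n ∈ Finset.Icc 0 ⌊y⌋₊, residueClass a n * trapezoid y h n := by
        refine Finset.sum_congr rfl fun n hn => ?_
        rw [trapezoid_of_le hh ((Nat.le_floor_iff hy).mp (Finset.mem_Icc.mp hn).2), mul_one]
    _ ≤ W := sum_le_hasSum _
        (fun n _ => mul_nonneg (residueClass_nonneg a n) (trapezoid_nonneg hh)) hW

lemma le_psiMod_of_hasSum {y h W : ℝ} (hh : 0 < h)
    (hW : HasSum (fun n : ℕ => residueClass a n * trapezoid y h n) W) : W ≤ psiMod a (y + h) := by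
  have hfinite : HasSum (fun n : ℕ => residueClass a n * trapezoid y h n)
      (∑ n ∈ Finset.Icc 0 ⌊y + h⌋₊, residueClass a n * trapezoid y h n) := by
    refine hasSum_sum_of_ne_finset_zero fun n hn => ?_
    rw [trapezoid_of_ge hh, mul_zero]
    by_contra! hlt
    exact hn (Finset.mem_Icc.mpr ⟨n.zero_le, Nat.le_floor hlt.le⟩)
  rw [hW.unique hfinite]
  exact Finset.sum_le_sum fun n _ =>
    mul_le_of_le_one_right (residueClass_nonneg a n) (trapezoid_le_one hh)

lemma hasSum_residueClass_mul [NeZero q] (ha : IsUnit a) {w : ℕ → ℝ}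
    {S : DirichletCharacter ℂ q → ℂ}
    (hS : ∀ χ, HasSum (fun n : ℕ => (χ n * (Λ n * w n : ℝ) : ℂ)) (S χ)) :
    HasSum (fun n => residueClass a n * w n) ((q.totient : ℂ)⁻¹ * ∑ χ, χ a⁻¹ * S χ).re := by
  have hcomplex : HasSum (fun n => ((residueClass a n * w n : ℝ) : ℂ))
      ((q.totient : ℂ)⁻¹ * ∑ χ, χ a⁻¹ * S χ) := by
    refine ((hasSum_sum fun χ _ => (hS χ).mul_left (χ a⁻¹)).mul_left
      (q.totient : ℂ)⁻¹).congr_fun fun n => ?_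
    rw [ofReal_mul, residueClass_apply ha, mul_assoc, Finset.sum_mul]
    congr 1
    refine Finset.sum_congr rfl fun χ _ => ?_
    push_cast
    ring
  simpa only [ofReal_re] using hasSum_re hcomplex

lemma sum_apply_inv_mul_poleOrder [NeZero q] (ha : IsUnit a) :
    ∑ χ : DirichletCharacter ℂ q, χ a⁻¹ * poleOrder χ = 1 := by
  have hinv : IsUnit a⁻¹ := by
    obtain ⟨u, rfl⟩ := ha
    exact ZMod.inv_coe_unit u ▸ u⁻¹.isUnit
  rw [Finset.sum_eq_single 1 (fun χ _ hχ => by rw [poleOrder_of_ne_one hχ, Nat.cast_zero, mul_zero])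
    (by simp), MulChar.one_apply hinv, poleOrder_one, Nat.cast_one, one_mul]

lemma abs_re_inv_totient_mul_sum_sub_le [NeZero q] (ha : IsUnit a) {M R : ℝ}
    {S : DirichletCharacter ℂ q → ℂ} (hS : ∀ χ, ‖S χ - poleOrder χ * (M : ℂ)‖ ≤ R) :
    |((q.totient : ℂ)⁻¹ * ∑ χ, χ a⁻¹ * S χ).re - M / q.totient| ≤ R := by
  have hφ : 0 < (q.totient : ℝ) := by exact_mod_cast Nat.totient_pos.mpr q.pos_of_neZero
  have hcard : Fintype.card (DirichletCharacter ℂ q) = q.totient := by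
    rw [← Nat.card_eq_fintype_card]
    exact DirichletCharacter.card_eq_totient_of_hasEnoughRootsOfUnity ℂ q
  have hmain : (q.totient : ℂ)⁻¹ * ∑ χ, χ a⁻¹ * S χ - (M / q.totient : ℝ)
      = (q.totient : ℂ)⁻¹ *
          ∑ χ : DirichletCharacter ℂ q, χ a⁻¹ * (S χ - poleOrder χ * (M : ℂ)) := by
    simp_rw [mul_sub, Finset.sum_sub_distrib, ← mul_assoc, ← Finset.sum_mul,
      sum_apply_inv_mul_poleOrder ha]
    push_cast
    ring
  have hterm (χ : DirichletCharacter ℂ q) : ‖χ a⁻¹ * (S χ - poleOrder χ * (M : ℂ))‖ ≤ R := by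
    rw [norm_mul]
    exact (mul_le_of_le_one_left (norm_nonneg _) (χ.norm_le_one _)).trans (hS χ)
  calc _ = |((q.totient : ℂ)⁻¹ * ∑ χ, χ a⁻¹ * S χ - (M / q.totient : ℝ)).re| := by
        rw [sub_re, ofReal_re]
    _ ≤ ‖(q.totient : ℂ)⁻¹ * ∑ χ, χ a⁻¹ * S χ - (M / q.totient : ℝ)‖ := abs_re_le_norm _
    _ = (q.totient : ℝ)⁻¹ *
          ‖∑ χ : DirichletCharacter ℂ q, χ a⁻¹ * (S χ - poleOrder χ * (M : ℂ))‖ := by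
        rw [hmain, norm_mul, norm_inv, norm_natCast]
    _ ≤ (q.totient : ℝ)⁻¹ * ∑ _χ : DirichletCharacter ℂ q, R := by
        gcongr
        exact norm_sum_le_of_le _ fun χ _ => hterm χ
    _ = R := by
        rw [Finset.sum_const, Finset.card_univ, hcard, nsmul_eq_mul, inv_mul_cancel_left₀ hφ.ne']

lemma exists_abs_sum_residueClass_trapezoid_sub_le : ∃ C > 0, ∀ {q : ℕ} [NeZero q],
    (∀ χ : DirichletCharacter ℂ q, RiemannHypothesisFor χ) → ∀ {a : ZMod q}, IsUnit a →
      ∀ {x y : ℝ}, 8 ≤ x → 1 ≤ y → y + √x ≤ 2 * x →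
        ∃ W, HasSum (fun n : ℕ => residueClass a n * trapezoid y (√x) n) W ∧
          |W - (y - 1 + √x / 2) / q.totient|
            ≤ C * (√x * Real.log x * (Real.log (6 * q) + Real.log x)) := by
  obtain ⟨C, hC0, hC⟩ := exists_norm_sum_twist_trapezoid_sub_le
  refine ⟨C, hC0, fun {q _} hRH {a} ha {x y} hx hy hyx => ?_⟩
  choose S hsum hS using fun χ => hC χ (hRH χ) hx hy hyx
  exact ⟨_, hasSum_residueClass_mul ha hsum, abs_re_inv_totient_mul_sum_sub_le ha hS⟩

lemma exists_abs_psiMod_sub_le_of_eight_le : ∃ C > 0, ∀ {q : ℕ} [NeZero q],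
    (∀ χ : DirichletCharacter ℂ q, RiemannHypothesisFor χ) → ∀ {a : ZMod q}, IsUnit a →
      ∀ {x : ℝ}, 8 ≤ x →
        |psiMod a x - x / q.totient|
          ≤ √x + C * (√x * Real.log x * (Real.log (6 * q) + Real.log x)) := by
  obtain ⟨C, hC0, hC⟩ := exists_abs_sum_residueClass_trapezoid_sub_le
  refine ⟨C, hC0, fun {q _} hRH {a} ha {x} hx => ?_⟩
  have hsq : √x * √x = x := Real.mul_self_sqrt (by linarith)
  have hs2 : 2 ≤ √x := Real.le_sqrt_of_sq_le (by linarith)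
  have hs0 : 0 < √x := by linarith
  have hsφ := div_natCast_le_self hs0.le q.totient
  obtain ⟨V, hV, hVle⟩ := hC hRH ha hx (by nlinarith : 1 ≤ x - √x) (by linarith)
  obtain ⟨W, hW, hWle⟩ := hC hRH ha hx (by linarith : 1 ≤ x) (by nlinarith)
  have hlower : V ≤ psiMod a x := by simpa using le_psiMod_of_hasSum hs0 hV
  have hupper : psiMod a x ≤ W := psiMod_le_of_hasSum (by linarith) hs0 hW
  have hVmain : x / q.totient - √x ≤ (x - √x - 1 + √x / 2) / q.totient :=
    calc x / q.totient - √x ≤ (x - √x) / q.totient := by rw [sub_div]; gcongr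
      _ ≤ (x - √x - 1 + √x / 2) / q.totient := by gcongr; linarith
  have hWmain : (x - 1 + √x / 2) / q.totient ≤ x / q.totient + √x :=
    calc (x - 1 + √x / 2) / q.totient ≤ (x + √x) / q.totient := by gcongr <;> linarith
      _ ≤ x / q.totient + √x := by rw [add_div]; gcongr
  rw [abs_le] at hVle hWle ⊢
  constructor <;> linarith

lemma half_le_log {t : ℝ} (ht : 2 ≤ t) : 1 / 2 ≤ Real.log t := by
  linarith [Real.log_le_log two_pos ht, Real.log_two_gt_d9]

lemma exists_abs_psiMod_sub_le : ∃ C > 0, ∀ {q : ℕ} [NeZero q],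
    (∀ χ : DirichletCharacter ℂ q, RiemannHypothesisFor χ) → ∀ {a : ZMod q}, IsUnit a →
      ∀ {x : ℝ}, 2 ≤ x →
        |psiMod a x - x / q.totient|
          ≤ C * (√x * Real.log x * (Real.log (6 * q) + Real.log x)) := by
  obtain ⟨C, hC0, hC⟩ := exists_abs_psiMod_sub_le_of_eight_le
  refine ⟨C + 128, by positivity, fun {q _} hRH {a} ha {x} hx => ?_⟩
  have hlog := half_le_log hx
  have hsqrt : 1 ≤ √x := Real.one_le_sqrt.mpr (by linarith)
  have hlogq : 1 ≤ Real.log (6 * q) := by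
    rw [Real.le_log_iff_exp_le (by linarith [one_le_natCast_of_neZero q])]
    linarith [Real.exp_one_lt_d9, one_le_natCast_of_neZero q]
  have hbound : √x ≤ 2 * (√x * Real.log x * (Real.log (6 * q) + Real.log x)) :=
    calc √x = 2 * (√x * (1 / 2) * 1) := by ring
      _ ≤ _ := by gcongr; linarith
  rcases lt_or_ge x 8 with hx8 | hx8
  · have htrivial := abs_psiMod_sub_div_totient_le a (by linarith : 0 ≤ x)
    nlinarith
  · linarith [hC hRH ha hx8]

end Progression

section PartialSummation

open MeasureTheory Set
open ArithmeticFunction (vonMangoldt)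
open ArithmeticFunction.vonMangoldt (residueClass)

variable {q : ℕ}

/-- The coefficients of `thetaMod`: `log p` at the primes `p ≡ a (mod q)`, and `0` elsewhere. -/
noncomputable def primeLogMod (a : ZMod q) (k : ℕ) : ℝ :=
  if k.Prime ∧ (k : ZMod q) = a then Real.log k else 0

/-- The Chebyshev function `θ(t; q, a)` of a residue class: the sum of `log p` over the primes
`p ≤ t` with `p ≡ a (mod q)`. -/
noncomputable def thetaMod (a : ZMod q) (t : ℝ) : ℝ := ∑ k ∈ Finset.Icc 0 ⌊t⌋₊, primeLogMod a k

lemma primeLogMod_le_residueClass (a : ZMod q) (k : ℕ) : primeLogMod a k ≤ residueClass a k := by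
  simp only [residueClass, indicator_apply, mem_ofPred_eq, primeLogMod]
  by_cases hp : k.Prime <;> by_cases hk : (k : ZMod q) = a <;>
    simp [hp, hk, ArithmeticFunction.vonMangoldt_apply_prime,
      ArithmeticFunction.vonMangoldt_nonneg]

lemma residueClass_sub_primeLogMod_le (a : ZMod q) (k : ℕ) :
    residueClass a k - primeLogMod a k ≤ vonMangoldt k - if k.Prime then Real.log k else 0 := by
  simp only [residueClass, indicator_apply, mem_ofPred_eq, primeLogMod]
  by_cases hp : k.Prime <;> by_cases hk : (k : ZMod q) = a <;>
    simp [hp, hk, ArithmeticFunction.vonMangoldt_apply_prime,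
      ArithmeticFunction.vonMangoldt_nonneg]

lemma abs_psiMod_sub_thetaMod_le (a : ZMod q) {t : ℝ} (ht : 1 ≤ t) :
    |psiMod a t - thetaMod a t| ≤ 2 * √t * Real.log t := by
  rw [psiMod, thetaMod, ← Finset.sum_sub_distrib, abs_of_nonneg
    (Finset.sum_nonneg fun k _ => sub_nonneg.mpr (primeLogMod_le_residueClass a k))]
  calc ∑ k ∈ Finset.Icc 0 ⌊t⌋₊, (residueClass a k - primeLogMod a k)
      ≤ ∑ k ∈ Finset.Icc 0 ⌊t⌋₊, (vonMangoldt k - if k.Prime then Real.log k else 0) :=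
        Finset.sum_le_sum fun k _ => residueClass_sub_primeLogMod_le a k
    _ = Chebyshev.psi t - Chebyshev.theta t := by
        rw [Finset.sum_sub_distrib, ← Finset.sum_filter, ← Chebyshev.psi_eq_sum_Icc,
          ← Chebyshev.theta_eq_sum_Icc]
    _ ≤ 2 * √t * Real.log t := Chebyshev.psi_sub_theta_le ht

lemma log_six_mul_add_log_le {Q t x : ℝ} (hQ : 1 ≤ Q) (ht : 2 ≤ t) (htx : t ≤ x) :
    Real.log (6 * Q) + Real.log t ≤ 4 * Real.log (Q * x) := by
  have hQx : 2 ≤ Q * x := by nlinarith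
  rw [← Real.log_mul (by positivity) (by positivity)]
  calc Real.log (6 * Q * t) ≤ Real.log ((Q * x) ^ 4) := by
        refine Real.log_le_log (by positivity) ?_
        calc 6 * Q * t ≤ 2 ^ 3 * (Q * x) := by nlinarith
          _ ≤ (Q * x) ^ 3 * (Q * x) := by gcongr
          _ = (Q * x) ^ 4 := by ring
    _ = 4 * Real.log (Q * x) := by rw [Real.log_pow, Nat.cast_ofNat]

lemma exists_abs_thetaMod_sub_le : ∃ C > 0, ∀ {q : ℕ} [NeZero q],
    (∀ χ : DirichletCharacter ℂ q, RiemannHypothesisFor χ) → ∀ {a : ZMod q}, IsUnit a →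
      ∀ {x t : ℝ}, 2 ≤ t → t ≤ x →
        |thetaMod a t - t / q.totient| ≤ C * Real.log (q * x) * (√t * Real.log t) := by
  obtain ⟨C, hC0, hC⟩ := exists_abs_psiMod_sub_le
  refine ⟨4 * C + 4, by positivity, fun {q _} hRH {a} ha {x t} ht htx => ?_⟩
  have hq := one_le_natCast_of_neZero q
  have hqx : 1 / 2 ≤ Real.log (q * x) := half_le_log (by nlinarith)
  have hlogs := log_six_mul_add_log_le hq ht htx
  have hlogt := half_le_log ht
  calc |thetaMod a t - t / q.totient|
      ≤ |thetaMod a t - psiMod a t| + |psiMod a t - t / q.totient| := abs_sub_le _ _ _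
    _ ≤ 2 * √t * Real.log t + C * (√t * Real.log t * (Real.log (6 * q) + Real.log t)) := by
        gcongr
        · exact abs_sub_comm (thetaMod a t) _ ▸ abs_psiMod_sub_thetaMod_le a (by linarith)
        · exact hC hRH ha ht
    _ ≤ 2 * √t * Real.log t * (2 * Real.log (q * x))
          + C * (√t * Real.log t * (4 * Real.log (q * x))) := by
        gcongr ?_ + C * (√t * Real.log t * ?_)
        exact le_mul_of_one_le_right (by positivity) (by linarith)
    _ = (4 * C + 4) * Real.log (q * x) * (√t * Real.log t) := by ring

lemma primesCountMod_eq_sum (D a : ℕ) {n : ℝ} (hn : 0 ≤ n) :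
    (primesCountMod n D a : ℝ)
      = ∑ k ∈ Finset.Icc 0 ⌊n⌋₊, (Real.log k)⁻¹ * primeLogMod (a : ZMod D) k := by
  have hset : {p : ℕ | p.Prime ∧ (p : ℝ) ≤ n ∧ p % D = a % D}
      = ((Finset.Icc 0 ⌊n⌋₊).filter fun k => k.Prime ∧ (k : ZMod D) = a : Finset ℕ) := by
    ext p
    simp only [mem_ofPred_eq, Finset.coe_filter, Finset.mem_Icc, Nat.zero_le, true_and,
      Nat.le_floor_iff hn, ZMod.natCast_eq_natCast_iff']
    tauto
  rw [primesCountMod, hset, ncard_coe_finset, Finset.card_filter, Nat.cast_sum]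
  refine Finset.sum_congr rfl fun k _ => ?_
  unfold primeLogMod
  split_ifs with hk
  · have hlog : Real.log k ≠ 0 := (Real.log_pos (by exact_mod_cast hk.1.one_lt)).ne'
    rw [inv_mul_cancel₀ hlog, Nat.cast_one]
  · simp

lemma continuousOn_inv_mul_log_sq (n : ℝ) :
    ContinuousOn (fun t : ℝ => (t * Real.log t ^ 2)⁻¹) (Icc 2 n) := by
  refine ContinuousOn.inv₀ (continuousOn_id.mul ((Real.continuousOn_log.mono fun t ht => ?_).pow 2))
    fun t ht => ?_
  · exact (two_pos.trans_le ht.1).ne'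
  · have hlog := half_le_log ht.1
    have ht0 : 0 < t := two_pos.trans_le ht.1
    positivity

lemma differentiableAt_inv_log_of_two_le {t : ℝ} (ht : 2 ≤ t) :
    DifferentiableAt ℝ (fun u => (Real.log u)⁻¹) t :=
  Real.differentiableOn_inv_log.differentiableAt (Ioi_mem_nhds (by linarith))

lemma hasDerivAt_div_log {t : ℝ} (ht : 2 ≤ t) :
    HasDerivAt (fun u => u / Real.log u) (1 / Real.log t - 1 / Real.log t ^ 2) t := by
  have hlog := half_le_log ht
  refine ((hasDerivAt_id t).div (Real.hasDerivAt_log (by linarith : t ≠ 0))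
    (by linarith)).congr_deriv ?_
  simp only [id]
  field_simp

lemma primesCountMod_eq_thetaMod_div_log_add_integral (D a : ℕ) {n : ℝ} (hn : 2 ≤ n) :
    (primesCountMod n D a : ℝ) = thetaMod (a : ZMod D) n / Real.log n
      + ∫ t in (2 : ℝ)..n, thetaMod (a : ZMod D) t / (t * Real.log t ^ 2) := by
  have hderiv (t : ℝ) : deriv (fun u => (Real.log u)⁻¹) t = -(t * Real.log t ^ 2)⁻¹ := by
    rw [Real.deriv_inv_log_apply, neg_div, mul_inv, div_eq_mul_inv]
  rw [primesCountMod_eq_sum D a (by linarith),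
    sum_mul_eq_sub_integral_mul₁ (f := fun u => (Real.log u)⁻¹) (c := primeLogMod (a : ZMod D))
      (by simp [primeLogMod]) (by simp [primeLogMod]) n
      (fun t ht => differentiableAt_inv_log_of_two_le ht.1)
      (((continuousOn_inv_mul_log_sq n).neg.congr fun t _ => hderiv t).integrableOn_compact
        isCompact_Icc),
    sub_eq_add_neg, ← integral_neg, intervalIntegral.integral_of_le hn, inv_mul_eq_div]
  congr 1
  refine setIntegral_congr_fun measurableSet_Ioc fun t _ => ?_
  rw [hderiv, neg_mul, neg_neg, inv_mul_eq_div, thetaMod]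

lemma li_eq_div_log_add_integral {n : ℝ} (hn : 2 ≤ n) :
    li n = n / Real.log n - 2 / Real.log 2 + ∫ t in (2 : ℝ)..n, 1 / Real.log t ^ 2 := by
  have huIcc : uIcc 2 n = Icc 2 n := uIcc_of_le hn
  have hlog : IntervalIntegrable (fun t : ℝ => 1 / Real.log t) volume 2 n := by
    refine ContinuousOn.intervalIntegrable fun t ht => ContinuousAt.continuousWithinAt ?_
    rw [huIcc] at ht
    simpa only [one_div] using (differentiableAt_inv_log_of_two_le ht.1).continuousAt
  have hlogSq : IntervalIntegrable (fun t : ℝ => 1 / Real.log t ^ 2) volume 2 n :=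
    Chebyshev.intervalIntegrable_one_div_log_sq one_lt_two (by linarith)
  have hFTC := intervalIntegral.integral_eq_sub_of_hasDerivAt
    (fun t ht => hasDerivAt_div_log (huIcc ▸ ht : t ∈ Icc 2 n).1) (hlog.sub hlogSq)
  rw [intervalIntegral.integral_sub hlog hlogSq] at hFTC
  rw [li, ← hFTC, sub_add_cancel]

lemma intervalIntegrable_thetaMod_div (a : ZMod q) {n : ℝ} (hn : 2 ≤ n) :
    IntervalIntegrable (fun t => thetaMod a t / (t * Real.log t ^ 2)) volume 2 n := by
  rw [intervalIntegrable_iff_integrableOn_Icc_of_le hn]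
  simp only [div_eq_inv_mul, thetaMod]
  exact integrableOn_mul_sum_Icc (primeLogMod a) two_pos.le
    ((continuousOn_inv_mul_log_sq n).integrableOn_compact isCompact_Icc)

lemma primesCountMod_sub_li_div_eq (D a : ℕ) {n : ℝ} (hn : 2 ≤ n) :
    (primesCountMod n D a : ℝ) - li n / D.totient
      = (thetaMod (a : ZMod D) n - n / D.totient) / Real.log n
        + (∫ t in (2 : ℝ)..n, (thetaMod (a : ZMod D) t - t / D.totient) / (t * Real.log t ^ 2))
        + 2 / Real.log 2 / D.totient := by
  have hintegral :
      (∫ t in (2 : ℝ)..n, (thetaMod (a : ZMod D) t - t / D.totient) / (t * Real.log t ^ 2))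
        = (∫ t in (2 : ℝ)..n, thetaMod (a : ZMod D) t / (t * Real.log t ^ 2))
          - (∫ t in (2 : ℝ)..n, 1 / Real.log t ^ 2) / D.totient := by
    rw [← intervalIntegral.integral_div, ← intervalIntegral.integral_sub
      (intervalIntegrable_thetaMod_div _ hn)
      ((Chebyshev.intervalIntegrable_one_div_log_sq one_lt_two (by linarith)).div_const _)]
    refine intervalIntegral.integral_congr fun t ht => ?_
    rw [uIcc_of_le hn] at ht
    have ht0 : t ≠ 0 := (two_pos.trans_le ht.1).ne'
    simp only [sub_div]
    field_simp
  rw [primesCountMod_eq_thetaMod_div_log_add_integral D a hn, li_eq_div_log_add_integral hn,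
    hintegral]
  ring

lemma abs_integral_div_mul_log_sq_le {f : ℝ → ℝ} {n E : ℝ} (hn : 2 ≤ n) (hE : 0 ≤ E)
    (hf : ∀ t ∈ Ioc 2 n, |f t| ≤ E * (√t * Real.log t)) :
    |∫ t in (2 : ℝ)..n, f t / (t * Real.log t ^ 2)| ≤ 4 * E * √n := by
  have hbound (t : ℝ) (ht : t ∈ Ioc 2 n) :
      ‖f t / (t * Real.log t ^ 2)‖ ≤ 2 * E * t ^ (-(1 / 2) : ℝ) := by
    have ht0 : 0 < t := two_pos.trans ht.1
    have hlog := half_le_log ht.1.le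
    have hsq : √t * √t = t := Real.mul_self_sqrt ht0.le
    have : 0 < √t := Real.sqrt_pos.mpr ht0
    rw [Real.norm_eq_abs, abs_div, abs_of_pos (by positivity : 0 < t * Real.log t ^ 2),
      Real.rpow_neg ht0.le, ← Real.sqrt_eq_rpow]
    calc |f t| / (t * Real.log t ^ 2) ≤ E * (√t * Real.log t) / (√t * √t * Real.log t ^ 2) := by
          rw [hsq]
          gcongr
          exact hf t ht
      _ = (Real.log t)⁻¹ * E * (√t)⁻¹ := by field_simp
      _ ≤ 2 * E * (√t)⁻¹ := by
          gcongr
          rw [inv_le_comm₀ (by linarith) two_pos]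
          linarith
  have hintegrable : IntervalIntegrable (fun t : ℝ => 2 * E * t ^ (-(1 / 2) : ℝ)) volume 2 n :=
    (intervalIntegral.intervalIntegrable_rpow' (by norm_num)).const_mul _
  calc |∫ t in (2 : ℝ)..n, f t / (t * Real.log t ^ 2)|
      ≤ ∫ t in (2 : ℝ)..n, 2 * E * t ^ (-(1 / 2) : ℝ) :=
        intervalIntegral.norm_integral_le_of_norm_le hn (ae_of_all _ hbound) hintegrable
    _ = 4 * E * (√n - √2) := by
        rw [intervalIntegral.integral_const_mul, integral_rpow (Or.inl (by norm_num)),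
          Real.sqrt_eq_rpow, Real.sqrt_eq_rpow, show -(1 / 2) + 1 = (1 / 2 : ℝ) by norm_num]
        ring
    _ ≤ 4 * E * √n := by
        gcongr
        exact sub_le_self _ (Real.sqrt_nonneg 2)

lemma abs_primesCountMod_sub_li_div_le {D a : ℕ} {n E : ℝ} (hn : 2 ≤ n) (hE : 0 ≤ E)
    (hθ : ∀ t ∈ Icc 2 n, |thetaMod (a : ZMod D) t - t / D.totient| ≤ E * (√t * Real.log t)) :
    |(primesCountMod n D a : ℝ) - li n / D.totient| ≤ 5 * E * √n + 4 := by
  have hlog := half_le_log hn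
  have hboundary : |(thetaMod (a : ZMod D) n - n / D.totient) / Real.log n| ≤ E * √n := by
    rw [abs_div, abs_of_pos (by linarith : 0 < Real.log n), div_le_iff₀ (by linarith), mul_assoc]
    exact hθ n ⟨hn, le_rfl⟩
  have hlog2 := half_le_log le_rfl
  have hconst : |2 / Real.log 2 / D.totient| ≤ 4 := by
    rw [abs_of_nonneg (by positivity)]
    refine (div_natCast_le_self (by positivity) _).trans ?_
    rw [div_le_iff₀ (by linarith)]
    linarith
  rw [primesCountMod_sub_li_div_eq D a hn]
  linarith [abs_add_three ((thetaMod (a : ZMod D) n - n / D.totient) / Real.log n)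
    (∫ t in (2 : ℝ)..n, (thetaMod (a : ZMod D) t - t / D.totient) / (t * Real.log t ^ 2))
    (2 / Real.log 2 / D.totient),
    abs_integral_div_mul_log_sq_le hn hE fun t ht => hθ t (Ioc_subset_Icc_self ht)]

end PartialSummation

theorem pnt_progressions_of_ERH_general : ∃ C > 0, ∀ (D : ℕ) [NeZero D],
    (∀ χ : DirichletCharacter ℂ D, RiemannHypothesisFor χ) → ∀ n : ℝ, 2 ≤ n →
      ∀ a : ℕ, Nat.Coprime a D →
        |(primesCountMod n D a : ℝ) - li n / D.totient| ≤ C * √n * Real.log (D * n) := by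
  obtain ⟨C, hC0, hC⟩ := exists_abs_thetaMod_sub_le
  refine ⟨5 * C + 8, by positivity, fun D _ hRH n hn a ha => ?_⟩
  have hlog : 1 / 2 ≤ Real.log (D * n) := half_le_log (by nlinarith [one_le_natCast_of_neZero D])
  have hsqrt : 1 ≤ √n := Real.one_le_sqrt.mpr (by linarith)
  calc |(primesCountMod n D a : ℝ) - li n / D.totient|
      ≤ 5 * (C * Real.log (D * n)) * √n + 4 :=
        abs_primesCountMod_sub_li_div_le hn (by positivity) fun t ht =>
          hC hRH ((ZMod.isUnit_iff_coprime a D).mpr ha) ht.1 ht.2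
    _ ≤ (5 * C + 8) * √n * Real.log (D * n) := by nlinarith

/-- Under ERH, the strong form of the prime number theorem in arithmetic progressions:
`|π(n, D, a) - li(n)/φ(D)| ≤ C √n log n` with an absolute constant `C`. -/
theorem pnt_progressions_of_ERH (erh : ExtendedRiemannHypothesis) :
    ∃ C : ℝ, ∀ n : ℝ, 2 ≤ n → ∀ D : ℕ, 1 ≤ D → (D : ℝ) < n →
      ∀ a : ℕ, Nat.Coprime a D →
        |(primesCountMod n D a : ℝ) - li n / (Nat.totient D : ℝ)|
          ≤ C * Real.sqrt n * Real.log n := by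
  obtain ⟨C, hC0, hC⟩ := pnt_progressions_of_ERH_general
  refine ⟨C * 2, fun n hn D hD hDn a ha => ?_⟩
  have : NeZero D := ⟨by omega⟩
  have hlog : Real.log (D * n) ≤ 2 * Real.log n := by
    rw [Real.log_mul (by positivity) (by positivity), two_mul]
    gcongr
  calc _ ≤ C * √n * Real.log (D * n) := hC D (erh D) n hn a ha
    _ ≤ C * √n * (2 * Real.log n) := by gcongr
    _ = C * 2 * √n * Real.log n := by ring
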